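/- arXiv:math/0406335 — 3 statements merged into one kernel-verified Lean document; each statement's English description precedes it below -/
import Mathlib

section
/- For every ε > 0 there are infinitely many integers n ≥ 16 with L(n) < (1/log 2 + ε)·log log n. -/
/-!
The witnesses are `n = lcm(1, …, 2 ^ k)` for large `k`.

Carmichael's function commutes with `lcm`, hence so do its iterates, and `λ_j(n)` is the lcm of
the `λ_j(m)` with `m ≤ 2 ^ k`. For `m > 2` the value `λ(m)` is even, and for even `m` it is at most
`φ(m) ≤ m / 2`; thus from the first iterate on, each step at least halves the value until `1` is
reached, and `λ_{k+1}(m) = 1` for all `m ≤ 2 ^ k` (`carmichael_iterate_eq_one`). So `L(n) ≤ k + 1`.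

On the other hand `log n = ψ(2 ^ k)`, where `ψ` is Chebyshev's function, and the elementary lower
bound for `ψ` gives `log n ≥ 2 ^ (k - 2)`, i.e. `log log n ≥ (k - 2) log 2`. As `k → ∞`, the
quantity `(1 / log 2 + ε) (k - 2) log 2 = (k - 2) (1 + ε log 2)` exceeds `k + 1`.
-/

/-- Carmichael's function: the exponent of the multiplicative group `(ℤ/nℤ)ˣ`. -/
noncomputable def lam (n : ℕ) : ℕ := Monoid.exponent (ZMod n)ˣ

/-- `L n` is the least nonnegative integer `k` such that the `k`-th iterate of `λ`
at `n` equals `1`. -/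
noncomputable def iterL (n : ℕ) : ℕ := sInf {k : ℕ | lam^[k] n = 1}

open ArithmeticFunction in
theorem carmichael_pos {n : ℕ} (hn : n ≠ 0) : 0 < carmichael n := by
  have : NeZero n := ⟨hn⟩
  rw [carmichael_eq_exponent hn]
  exact Nat.pos_of_ne_zero Monoid.exponent_ne_zero_of_finite

/-- The unit `-1` has order `2` modulo `n > 2`. -/
theorem even_carmichael {n : ℕ} (hn : 2 < n) : Even (ArithmeticFunction.carmichael n) := by
  have : Fact (2 < n) := ⟨hn⟩
  by_contra h
  rw [Nat.not_even_iff_odd] at h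
  have h1 := ArithmeticFunction.pow_carmichael (-1 : (ZMod n)ˣ)
  rw [h.neg_one_pow] at h1
  exact ZMod.neg_one_ne_one (n := n) (by simpa using congrArg Units.val h1)

theorem two_mul_totient_le {n : ℕ} (hn : Even n) : 2 * n.totient ≤ n := by
  induction n using Nat.strong_induction_on with
  | _ n ih =>
    obtain ⟨m, rfl⟩ := hn
    rcases Nat.eq_zero_or_pos m with rfl | hm
    · simp
    have hle := Nat.totient_le m
    rcases Nat.even_or_odd m with h | h
    · have := ih m (by lia) h
      rw [← two_mul, Nat.totient_two_mul_of_even h]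
      lia
    · rw [← two_mul, Nat.totient_two_mul_of_odd h]
      lia

theorem two_mul_carmichael_le {n : ℕ} (h0 : n ≠ 0) (hn : Even n) :
    2 * ArithmeticFunction.carmichael n ≤ n := by
  have h1 := Nat.le_of_dvd (Nat.totient_pos.2 (Nat.pos_of_ne_zero h0))
    (ArithmeticFunction.carmichael_dvd_totient n)
  have h2 := two_mul_totient_le hn
  lia

theorem carmichael_one : ArithmeticFunction.carmichael 1 = 1 :=
  Nat.dvd_one.1 (by simpa using ArithmeticFunction.carmichael_dvd_totient 1)

theorem carmichael_two : ArithmeticFunction.carmichael 2 = 1 :=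
  Nat.dvd_one.1 (by simpa using ArithmeticFunction.carmichael_dvd_totient 2)

theorem carmichael_iterate_one (k : ℕ) : ArithmeticFunction.carmichael^[k] 1 = 1 :=
  Function.iterate_fixed carmichael_one k

theorem carmichael_iterate_eq_one_of_even (k : ℕ) :
    ∀ n : ℕ, n ≠ 0 → (Even n ∨ n = 1) → n ≤ 2 ^ k →
      ArithmeticFunction.carmichael^[k] n = 1 := by
  induction k with
  | zero =>
    intro n h0 _ hn
    simp only [pow_zero, Function.iterate_zero, id_eq] at *
    lia
  | succ k ih =>
    rintro n h0 (he | rfl) hn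
    · rw [Function.iterate_succ_apply]
      rcases eq_or_ne n 2 with rfl | h2
      · rw [carmichael_two, carmichael_iterate_one]
      have hlt : 2 < n := by
        obtain ⟨m, rfl⟩ := he
        lia
      have := two_mul_carmichael_le h0 he
      rw [pow_succ] at hn
      exact ih _ (carmichael_pos h0).ne' (Or.inl (even_carmichael hlt)) (by lia)
    · exact carmichael_iterate_one _

/-- One extra step makes an arbitrary `n` even (or `1`), after which the values halve. -/
theorem carmichael_iterate_eq_one {k n : ℕ} (h0 : n ≠ 0) (hn : n ≤ 2 ^ k) :
    ArithmeticFunction.carmichael^[k + 1] n = 1 := by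
  rw [Function.iterate_succ_apply]
  have hle : ArithmeticFunction.carmichael n ≤ n :=
    (Nat.le_of_dvd (Nat.totient_pos.2 (Nat.pos_of_ne_zero h0))
      (ArithmeticFunction.carmichael_dvd_totient n)).trans (Nat.totient_le n)
  refine carmichael_iterate_eq_one_of_even k _ (carmichael_pos h0).ne' ?_ (hle.trans hn)
  rcases le_or_gt n 2 with h | h
  · right
    interval_cases n
    · exact absurd rfl h0
    · exact carmichael_one
    · exact carmichael_two
  · exact Or.inl (even_carmichael h)

theorem carmichael_iterate_finset_lcm (k : ℕ) (s : Finset ℕ) (f : ℕ → ℕ) :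
    ArithmeticFunction.carmichael^[k] (s.lcm f) =
      s.lcm (fun i => ArithmeticFunction.carmichael^[k] (f i)) := by
  induction k with
  | zero => rfl
  | succ k ih =>
    simp only [Function.iterate_succ_apply', ih]
    exact ArithmeticFunction.carmichael_finset_lcm s _

/-- Positivity is needed: `lam 0` is the exponent of `ℤˣ`, which is `2`, while Mathlib sets
`carmichael 0 = 0`. -/
theorem lam_iterate_eq (k : ℕ) : ∀ {n : ℕ}, n ≠ 0 →
    lam^[k] n = ArithmeticFunction.carmichael^[k] n := by
  induction k with
  | zero => intro n _; rfl
  | succ k ih =>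
    intro n hn
    have h : lam n = ArithmeticFunction.carmichael n :=
      (ArithmeticFunction.carmichael_eq_exponent hn).symm
    rw [Function.iterate_succ_apply, Function.iterate_succ_apply, h, ih (carmichael_pos hn).ne']

theorem iterL_lcmUpto_le (k : ℕ) : iterL (Nat.lcmUpto (2 ^ k)) ≤ k + 1 := by
  apply Nat.sInf_le
  change lam^[k + 1] _ = 1
  rw [lam_iterate_eq _ (Nat.lcmUpto_ne_zero _), Nat.lcmUpto,
    carmichael_iterate_finset_lcm]
  refine Nat.dvd_one.1 (Finset.lcm_dvd fun i hi => ?_)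
  rw [Finset.mem_Icc] at hi
  have h0 : i ≠ 0 := by lia
  simp only [id]
  rw [carmichael_iterate_eq_one h0 hi.2]

theorem le_lcmUpto {n : ℕ} (hn : 1 ≤ n) : n ≤ Nat.lcmUpto n :=
  Nat.le_of_dvd (Nat.lcmUpto_pos n)
    (Finset.dvd_lcm (f := id) (Finset.mem_Icc.2 ⟨hn, le_rfl⟩))

theorem two_pow_le_log_lcmUpto (k : ℕ) :
    (2 : ℝ) ^ (k + 1) ≤ Real.log (Nat.lcmUpto (2 ^ (k + 3))) := by
  rw [← Chebyshev.psi_eq_log_lcmUpto]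
  refine le_trans ?_ (Chebyshev.psi_ge _)
  have h2 : (1 / 2 : ℝ) < Real.log 2 := by linarith [Real.log_two_gt_d9]
  -- The correction term `(k + 4) log 2` is at most half of `2 ^ (k + 3) log 2`, as `k + 4 ≤ 4 * 2 ^ k`.
  have hlog : Real.log (((2 ^ (k + 3) : ℕ) : ℝ) + 1) ≤ (k + 4) * Real.log 2 := by
    have : ((k : ℝ) + 4) * Real.log 2 = Real.log (2 ^ (k + 4)) := by
      rw [Real.log_pow]; push_cast; ring
    rw [this]
    apply Real.log_le_log (by positivity)
    push_cast
    have : (1 : ℝ) ≤ 2 ^ (k + 3) := one_le_pow₀ (by norm_num)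
    rw [pow_succ _ (k + 3)]
    linarith
  have hk : (k : ℝ) + 1 ≤ 2 ^ k := by exact_mod_cast Nat.lt_two_pow_self (n := k)
  have h4 : ((k : ℝ) + 4) * Real.log 2 ≤ 4 * 2 ^ k * Real.log 2 :=
    mul_le_mul_of_nonneg_right (by linarith [Nat.cast_nonneg (α := ℝ) k]) (by linarith)
  have h5 : (2 : ℝ) ^ k * (1 / 2) ≤ 2 ^ k * Real.log 2 :=
    mul_le_mul_of_nonneg_left h2.le (by positivity)
  have h6 : ((2 ^ (k + 3) : ℕ) : ℝ) * Real.log 2 = 8 * (2 ^ k * Real.log 2) := by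
    push_cast; ring
  rw [h6, pow_succ]
  linarith

theorem loglog_lcmUpto_ge (k : ℕ) :
    ((k : ℝ) + 1) * Real.log 2 ≤
      Real.log (Real.log (Nat.lcmUpto (2 ^ (k + 3)))) := by
  have h := Real.log_le_log (by positivity) (two_pow_le_log_lcmUpto k)
  rw [Real.log_pow] at h
  exact_mod_cast h

/-- For every `ε > 0` there are infinitely many integers `n ≥ 16` with
`L(n) < (1/log 2 + ε) log log n`. -/
theorem iterL_small_infinitely_often (ε : ℝ) (hε : 0 < ε) :
    {n : ℕ | 16 ≤ n ∧
      (iterL n : ℝ) < (1 / Real.log 2 + ε) * Real.log (Real.log n)}.Infinite := by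
  refine Set.infinite_of_forall_exists_gt fun m => ?_
  have hlog : 0 < Real.log 2 := Real.log_pos (by norm_num)
  have hc : 0 < ε * Real.log 2 := by positivity
  obtain ⟨K, hK⟩ := exists_nat_gt (3 / (ε * Real.log 2))
  rw [div_lt_iff₀ hc] at hK
  obtain ⟨k, hKk, hmk, hk⟩ : ∃ k, K ≤ k ∧ m ≤ k ∧ 16 ≤ k :=
    ⟨K + m + 16, by lia, by lia, by lia⟩
  have hbig : k < Nat.lcmUpto (2 ^ (k + 3)) :=
    ((Nat.le_add_right k 3).trans_lt Nat.lt_two_pow_self).trans_le (le_lcmUpto Nat.one_le_two_pow)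
  have hL := iterL_lcmUpto_le (k + 3)
  have hlow := loglog_lcmUpto_ge k
  generalize Nat.lcmUpto (2 ^ (k + 3)) = n at hbig hL hlow
  refine ⟨n, ⟨by lia, ?_⟩, by lia⟩
  have hL' : (iterL n : ℝ) ≤ k + 4 := by exact_mod_cast hL
  have hKk' : (K : ℝ) * (ε * Real.log 2) ≤ k * (ε * Real.log 2) := by gcongr
  calc (iterL n : ℝ) ≤ k + 4 := hL'
    _ < ((k : ℝ) + 1) + (k + 1) * (ε * Real.log 2) := by linarith
    _ = (1 / Real.log 2 + ε) * (((k : ℝ) + 1) * Real.log 2) := by field_simp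
    _ ≤ _ := mul_le_mul_of_nonneg_left hlow (by positivity)
end

section
/- There is a constant C > 0 such that for all real x > e^{e^e}, the number of integers n ≤ x for which there exists a prime q > (log log x)² with q dividing φ(φ(n)) but q not dividing λ(λ(n)) is at most C·x/(log log log x). Consequently, for almost all n ≤ x, the prime divisors of φ(φ(n)) and of λ(λ(n)) exceeding (log log x)² are identical. -/
/-! ### Prime divisors of the totient and of Carmichael's function -/

lemma prime_dvd_lam {p m : ℕ} (hp : p.Prime) (hm : m ≠ 0) (h : p ∣ m.totient) : p ∣ lam m := by
  have : NeZero m := ⟨hm⟩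
  have : Fact p.Prime := ⟨hp⟩
  rw [← ZMod.card_units_eq_totient] at h
  obtain ⟨g, hg⟩ := exists_prime_orderOf_dvd_card p h
  rw [← hg]
  exact Monoid.order_dvd_exponent g

lemma lam_dvd {m n : ℕ} (hn : n ≠ 0) (h : m ∣ n) : lam m ∣ lam n := by
  have : NeZero n := ⟨hn⟩
  exact MonoidHom.exponent_dvd (ZMod.unitsMap_surjective h)

lemma lam_ne_zero (n : ℕ) : lam n ≠ 0 :=
  Monoid.exponent_ne_zero_of_finite

lemma lam_prime {p : ℕ} (hp : p.Prime) : lam p = p - 1 := by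
  have : Fact p.Prime := ⟨hp⟩
  rw [lam, IsCyclic.exponent_eq_card, Nat.card_eq_fintype_card, ZMod.card_units_eq_totient,
    Nat.totient_prime hp]

lemma prime_dvd_totient {q m : ℕ} (hq : q.Prime) (hm : m ≠ 0) (h : q ∣ m.totient) :
    q ^ 2 ∣ m ∨ ∃ p, p.Prime ∧ p ∣ m ∧ q ∣ p - 1 := by
  rw [Nat.totient_eq_prod_factorization hm, Finsupp.prod, hq.prime.dvd_finsetProd_iff] at h
  obtain ⟨p, hp, hd⟩ := h
  rw [Nat.support_factorization, Nat.mem_primeFactors] at hp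
  rcases hq.dvd_mul.1 hd with h1 | h1
  · left
    have h2 : q = p := (Nat.prime_dvd_prime_iff_eq hq hp.1).1 (hq.dvd_of_dvd_pow h1)
    subst h2
    rw [hq.pow_dvd_iff_le_factorization hm]
    by_contra hc
    have : m.factorization q - 1 = 0 := by omega
    rw [this] at h1
    simp at h1
    exact hq.one_lt.ne' h1
  · exact Or.inr ⟨p, hp.1, hp.2.1, h1⟩

/-- The shape of an exceptional `n`. If `q ∣ φ(φ(n))` but `q ∤ λ(λ(n))`, then `q ^ 2 ∣ φ(n)` and
`q ^ 2 ∤ λ(n)`. When `q ^ 2 ∤ n`, a single prime `p ∣ n` with `p ≡ 1 (mod q)` cannot account for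
`q ^ 2 ∣ φ(n)`: then `q ^ 2 ∣ p - 1 = λ(p) ∣ λ(n)`. -/
lemma bad_structure {q n : ℕ} (hq : q.Prime) (hn : n ≠ 0)
    (h1 : q ∣ Nat.totient (Nat.totient n)) (h2 : ¬ q ∣ lam (lam n)) :
    q ^ 2 ∣ n ∨ ∃ p₁ p₂, p₁.Prime ∧ p₂.Prime ∧ p₁ ≠ p₂ ∧ p₁ ∣ n ∧ p₂ ∣ n ∧
      q ∣ p₁ - 1 ∧ q ∣ p₂ - 1 := by
  have hφ : n.totient ≠ 0 := by simpa using hn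
  rcases prime_dvd_totient hq hφ h1 with h3 | ⟨p, hp, hpn, hqp⟩
  swap
  · exfalso
    apply h2
    have := lam_dvd (lam_ne_zero n) (prime_dvd_lam hp hn hpn)
    rw [lam_prime hp] at this
    exact hqp.trans this
  have h4 : ¬ q ^ 2 ∣ lam n := by
    intro h
    apply h2
    refine dvd_trans (prime_dvd_lam hq (pow_ne_zero 2 hq.ne_zero) ?_) (lam_dvd (lam_ne_zero n) h)
    rw [Nat.totient_prime_pow hq (by norm_num)]
    simp
  by_cases h5 : q ^ 2 ∣ n
  · exact Or.inl h5
  right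
  rcases prime_dvd_totient hq hn ((dvd_pow_self q two_ne_zero).trans h3) with h | ⟨p, hp, hpn, hqp⟩
  · exact absurd h h5
  obtain ⟨k, m, hpm, hnk⟩ := Nat.exists_eq_pow_mul_and_not_dvd hn p hp.ne_one
  have hm : m ≠ 0 := by rintro rfl; simp at hpm
  have hk : 0 < k := by
    rcases Nat.eq_zero_or_pos k with rfl | h
    · simp only [pow_zero, one_mul] at hnk
      exact absurd (hnk ▸ hpn) hpm
    · exact h
  have hmn : m ∣ n := hnk ▸ Dvd.intro_left _ rfl
  have hpq : q ≠ p := by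
    rintro rfl
    have := Nat.le_of_dvd (by have := hq.two_le; omega) hqp
    have := hq.two_le
    omega
  -- Either the part of `n` prime to `p` supplies a second prime, or `q ^ 2 ∣ p - 1`.
  by_cases h6 : q ∣ m.totient
  · rcases prime_dvd_totient hq hm h6 with h | ⟨p', hp', hpn', hqp'⟩
    · exact absurd (h.trans hmn) h5
    · exact ⟨p, p', hp, hp', fun h => hpm (h ▸ hpn'), hpn, hpn'.trans hmn, hqp, hqp'⟩
  · exfalso
    have hcop : Nat.Coprime (p ^ k) m := Nat.Coprime.pow_left k ((hp.coprime_iff_not_dvd).2 hpm)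
    rw [hnk, Nat.totient_mul hcop, Nat.totient_prime_pow hp hk] at h3
    have c1 : Nat.Coprime (q ^ 2) m.totient := Nat.Coprime.pow_left 2 ((hq.coprime_iff_not_dvd).2 h6)
    have c2 : Nat.Coprime (q ^ 2) (p ^ (k - 1)) :=
      Nat.Coprime.pow _ _ ((Nat.coprime_primes hq hp).2 hpq)
    have h7 := c2.dvd_of_dvd_mul_left (c1.dvd_of_dvd_mul_right h3)
    apply h4
    rw [← lam_prime hp] at h7
    exact h7.trans (lam_dvd hn hpn)

/-! ### Ramanujan sums and the sieve inequality -/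

open ArithmeticFunction in
/-- Ramanujan's sum `c_e(a)`, through the formula `c_e(a) = ∑_{d ∣ gcd(e, a)} μ(e / d) d`. -/
noncomputable def ramanujan (e a : ℕ) : ℝ :=
  ∑ d ∈ e.divisors, if d ∣ a then (moebius (e / d) : ℝ) * d else 0

lemma sum_divisors_moebius_real (h : ℕ) :
    ∑ d ∈ h.divisors, (ArithmeticFunction.moebius d : ℝ) = if h = 1 then 1 else 0 := by
  have h1 := congrArg (fun f : ArithmeticFunction ℤ => f h) ArithmeticFunction.moebius_mul_coe_zeta
  simp only [ArithmeticFunction.coe_mul_zeta_apply, ArithmeticFunction.one_apply] at h1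
  exact_mod_cast congrArg (Int.cast : ℤ → ℝ) h1

lemma sum_multiples_moebius {e : ℕ} (g : ℕ) (he : e ≠ 0) :
    ∑ d ∈ e.divisors, (if g ∣ d then (ArithmeticFunction.moebius (e / d) : ℝ) else 0) =
      if g = e then 1 else 0 := by
  by_cases hg : g ∣ e
  · obtain ⟨h, rfl⟩ := hg
    have hg0 : g ≠ 0 := left_ne_zero_of_mul he
    have hh0 : h ≠ 0 := right_ne_zero_of_mul he
    rw [← Finset.sum_filter]
    have key : ∑ d ∈ (g * h).divisors with g ∣ d, (ArithmeticFunction.moebius (g * h / d) : ℝ)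
        = ∑ d ∈ h.divisors, (ArithmeticFunction.moebius (h / d) : ℝ) := by
      symm
      apply Finset.sum_bij (fun d _ => g * d)
      · intro d hd
        rw [Nat.mem_divisors] at hd
        simp only [Finset.mem_filter, Nat.mem_divisors, dvd_mul_right, and_true]
        exact ⟨Nat.mul_dvd_mul_left g hd.1, he⟩
      · intro a _ b _ hab
        exact Nat.eq_of_mul_eq_mul_left (Nat.pos_of_ne_zero hg0) hab
      · intro b hb
        simp only [Finset.mem_filter, Nat.mem_divisors] at hb
        obtain ⟨⟨hb1, _⟩, c, rfl⟩ := hb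
        exact ⟨c, Nat.mem_divisors.2 ⟨Nat.dvd_of_mul_dvd_mul_left (Nat.pos_of_ne_zero hg0) hb1, hh0⟩, rfl⟩
      · intro d _
        rw [Nat.mul_div_mul_left _ _ (Nat.pos_of_ne_zero hg0)]
    rw [key, Nat.sum_div_divisors h (fun d => (ArithmeticFunction.moebius d : ℝ)),
      sum_divisors_moebius_real]
    have : (g = g * h) ↔ h = 1 := by
      rw [eq_comm, Nat.mul_eq_left hg0]
    simp [this]
  · rw [if_neg (by rintro rfl; exact hg dvd_rfl)]
    apply Finset.sum_eq_zero
    intro d hd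
    rw [if_neg]
    intro h
    exact hg (h.trans (Nat.dvd_of_mem_divisors hd))

lemma gcd_eq_sum_totient {e a b : ℕ} (he : e ≠ 0) (ha : a ∣ e) :
    (Nat.gcd a b : ℝ) = ∑ g ∈ e.divisors, if g ∣ a then (if g ∣ b then (g.totient : ℝ) else 0) else 0 := by
  have h0 : Nat.gcd a b ≠ 0 := Nat.gcd_ne_zero_left (ne_zero_of_dvd_ne_zero he ha)
  conv_lhs => rw [← Nat.sum_totient (Nat.gcd a b)]
  push_cast
  simp_rw [← ite_and, ← Nat.dvd_gcd_iff]
  rw [← Finset.sum_filter]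
  apply Finset.sum_congr _ (fun _ _ => rfl)
  ext g
  simp only [Nat.mem_divisors, Finset.mem_filter]
  constructor
  · rintro ⟨h, _⟩
    exact ⟨⟨(h.trans (Nat.gcd_dvd_left a b)).trans ha, he⟩, h⟩
  · rintro ⟨_, h⟩
    exact ⟨h, h0⟩

/-- Orthogonality of Ramanujan sums: `gcd(d₁, d₂) / (d₁ d₂)` is the density of the integers
divisible by both `d₁` and `d₂`, so the left side is the mean value of `c_{e₁} c_{e₂}`. It is
evaluated by writing `gcd(d₁, d₂) = ∑_{g ∣ d₁, g ∣ d₂} φ(g)`. -/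
lemma ramanujan_orthogonality {e₁ e₂ : ℕ} (h₁ : e₁ ≠ 0) (h₂ : e₂ ≠ 0) :
    ∑ d₁ ∈ e₁.divisors, ∑ d₂ ∈ e₂.divisors, (ArithmeticFunction.moebius (e₁ / d₁) : ℝ) *
      (ArithmeticFunction.moebius (e₂ / d₂) : ℝ) * (Nat.gcd d₁ d₂ : ℝ) =
      if e₁ = e₂ then (e₁.totient : ℝ) else 0 := by
  calc _ = ∑ d₁ ∈ e₁.divisors, ∑ d₂ ∈ e₂.divisors, ∑ g ∈ e₁.divisors,
        (g.totient : ℝ) * ((if g ∣ d₁ then (ArithmeticFunction.moebius (e₁ / d₁) : ℝ) else 0) *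
          (if g ∣ d₂ then (ArithmeticFunction.moebius (e₂ / d₂) : ℝ) else 0)) := by
        refine Finset.sum_congr rfl fun d₁ hd₁ => Finset.sum_congr rfl fun d₂ _ => ?_
        rw [gcd_eq_sum_totient h₁ (Nat.dvd_of_mem_divisors hd₁), Finset.mul_sum]
        refine Finset.sum_congr rfl fun g _ => ?_
        split_ifs <;> ring
    _ = ∑ g ∈ e₁.divisors, (g.totient : ℝ) *
        ((∑ d₁ ∈ e₁.divisors, if g ∣ d₁ then (ArithmeticFunction.moebius (e₁ / d₁) : ℝ) else 0) *
        (∑ d₂ ∈ e₂.divisors, if g ∣ d₂ then (ArithmeticFunction.moebius (e₂ / d₂) : ℝ) else 0)) := by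
        simp_rw [Finset.sum_mul_sum, Finset.mul_sum]
        rw [Finset.sum_congr rfl (fun d₁ _ => Finset.sum_comm), Finset.sum_comm]
    _ = _ := by
        simp_rw [sum_multiples_moebius _ h₁, sum_multiples_moebius _ h₂]
        rw [Finset.sum_eq_single e₁]
        · simp
        · intro b _ hb
          simp [hb]
        · intro h
          exact absurd (Nat.mem_divisors_self _ h₁) h

lemma count_dvd_progression {d q : ℕ} (K : ℕ) (hd : 0 < d) (hc : Nat.Coprime d q) :
    |(((Finset.range K).filter (fun k => d ∣ 1 + k * q)).card : ℝ) - K / d| ≤ 1 := by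
  obtain ⟨v, hv⟩ : ∃ v : ℕ, ∀ k : ℕ, d ∣ 1 + k * q ↔ k ≡ v [MOD d] := by
    have : NeZero d := ⟨hd.ne'⟩
    refine ⟨(-((ZMod.unitOfCoprime q hc.symm)⁻¹ : (ZMod d)ˣ) : ZMod d).val, fun k => ?_⟩
    rw [← ZMod.natCast_eq_natCast_iff, ZMod.natCast_zmod_val, ← ZMod.natCast_eq_zero_iff]
    push_cast
    have hq : (q : ZMod d) = (ZMod.unitOfCoprime q hc.symm : (ZMod d)ˣ) := by simp
    rw [hq]
    generalize ZMod.unitOfCoprime q hc.symm = u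
    constructor
    · intro h
      calc (k : ZMod d) = (1 + k * (u : ZMod d)) * (u⁻¹ : (ZMod d)ˣ) - (u⁻¹ : (ZMod d)ˣ) := by
            rw [add_mul, mul_assoc, Units.mul_inv]; ring
        _ = _ := by rw [h]; ring
    · intro h
      rw [h, neg_mul, Units.inv_mul]; ring
  simp_rw [hv]
  rw [← Nat.count_eq_card_filter_range, Nat.count_modEq_card _ hd]
  have h1 : (K : ℝ) / d = ((K / d : ℕ) : ℝ) + ((K % d : ℕ) : ℝ) / d := by
    have : (K : ℝ) = ((d * (K / d) + K % d : ℕ) : ℝ) := by rw [Nat.div_add_mod]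
    have hd' : (d : ℝ) ≠ 0 := by positivity
    rw [this]; push_cast; field_simp
  have h2 : ((K % d : ℕ) : ℝ) / d ≤ 1 := by
    rw [div_le_one (by positivity)]
    exact_mod_cast (Nat.mod_lt K hd).le
  have h3 : 0 ≤ ((K % d : ℕ) : ℝ) / d := by positivity
  rw [h1, abs_le]
  push_cast
  split_ifs <;> constructor <;> norm_num <;> linarith

/-- Orthogonality along the progression `1 + k q`, for moduli coprime to `q`. The error collects one
`O(1)` for each pair of divisors, weighted by `d₁ d₂ ≤ z ^ 2`. -/
lemma sum_ramanujan_mul (K : ℕ) {q z e₁ e₂ : ℕ} (h₁ : e₁ ≠ 0) (h₂ : e₂ ≠ 0)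
    (c₁ : Nat.Coprime e₁ q) (c₂ : Nat.Coprime e₂ q) (z₁ : e₁ ≤ z) (z₂ : e₂ ≤ z) :
    |∑ k ∈ Finset.range K, ramanujan e₁ (1 + k * q) * ramanujan e₂ (1 + k * q) -
      K * (if e₁ = e₂ then (e₁.totient : ℝ) else 0)| ≤ (z : ℝ) ^ 4 := by
  have hmu : ∀ n : ℕ, |(ArithmeticFunction.moebius n : ℝ)| ≤ 1 := fun n => by
    exact_mod_cast ArithmeticFunction.abs_moebius_le_one
  set N : ℕ → ℝ := fun d => (((Finset.range K).filter (fun k => d ∣ 1 + k * q)).card : ℝ) with hN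
  have e1 : ∑ k ∈ Finset.range K, ramanujan e₁ (1 + k * q) * ramanujan e₂ (1 + k * q) =
      ∑ d₁ ∈ e₁.divisors, ∑ d₂ ∈ e₂.divisors, (ArithmeticFunction.moebius (e₁ / d₁) : ℝ) *
      (ArithmeticFunction.moebius (e₂ / d₂) : ℝ) * (d₁ * d₂ * N (Nat.lcm d₁ d₂)) := by
    simp_rw [ramanujan, Finset.sum_mul_sum]
    rw [Finset.sum_comm]
    refine Finset.sum_congr rfl fun d₁ _ => ?_
    rw [Finset.sum_comm]
    refine Finset.sum_congr rfl fun d₂ _ => ?_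
    simp only [hN]
    rw [Finset.card_filter]
    push_cast
    rw [Finset.mul_sum, Finset.mul_sum]
    refine Finset.sum_congr rfl fun k _ => ?_
    simp only [Nat.lcm_dvd_iff]
    by_cases a1 : d₁ ∣ 1 + k * q <;> by_cases a2 : d₂ ∣ 1 + k * q <;> simp [a1, a2]
    ring
  rw [e1, ← ramanujan_orthogonality h₁ h₂, Finset.mul_sum, ← Finset.sum_sub_distrib]
  have bound : ∀ d₁ ∈ e₁.divisors, ∀ d₂ ∈ e₂.divisors,
      |(ArithmeticFunction.moebius (e₁ / d₁) : ℝ) *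
      (ArithmeticFunction.moebius (e₂ / d₂) : ℝ) * (d₁ * d₂ * N (Nat.lcm d₁ d₂)) -
      K * ((ArithmeticFunction.moebius (e₁ / d₁) : ℝ) *
      (ArithmeticFunction.moebius (e₂ / d₂) : ℝ) * (Nat.gcd d₁ d₂ : ℝ))| ≤ (z : ℝ) * z := by
    intro d₁ hd₁ d₂ hd₂
    have p1 : 0 < d₁ := Nat.pos_of_mem_divisors hd₁
    have p2 : 0 < d₂ := Nat.pos_of_mem_divisors hd₂
    have b1 : (d₁ : ℝ) ≤ z := by exact_mod_cast (Nat.divisor_le hd₁).trans z₁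
    have b2 : (d₂ : ℝ) ≤ z := by exact_mod_cast (Nat.divisor_le hd₂).trans z₂
    have pl : 0 < Nat.lcm d₁ d₂ := Nat.lcm_pos p1 p2
    have cl : Nat.Coprime (Nat.lcm d₁ d₂) q := by
      refine Nat.Coprime.coprime_dvd_left (Nat.lcm_dvd_mul d₁ d₂) (Nat.Coprime.mul_left ?_ ?_)
      · exact c₁.coprime_dvd_left (Nat.dvd_of_mem_divisors hd₁)
      · exact c₂.coprime_dvd_left (Nat.dvd_of_mem_divisors hd₂)
    have hc := count_dvd_progression K pl cl
    have hg : (Nat.gcd d₁ d₂ : ℝ) = d₁ * d₂ / (Nat.lcm d₁ d₂ : ℕ) := by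
      rw [eq_div_iff (by positivity)]
      exact_mod_cast Nat.gcd_mul_lcm d₁ d₂
    rw [hg]
    have : ∀ m₁ m₂ : ℝ, m₁ * m₂ * (d₁ * d₂ * N (Nat.lcm d₁ d₂)) -
      K * (m₁ * m₂ * (d₁ * d₂ / (Nat.lcm d₁ d₂ : ℕ))) =
      m₁ * (m₂ * (d₁ * (d₂ * (N (Nat.lcm d₁ d₂) - K / (Nat.lcm d₁ d₂ : ℕ))))) := by
      intros; ring
    rw [this, abs_mul, abs_mul, abs_mul, abs_mul, Nat.abs_cast, Nat.abs_cast]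
    calc _ ≤ 1 * (1 * ((z : ℝ) * (z * 1))) := by
          gcongr
          · exact hmu _
          · exact hmu _
      _ = _ := by ring
  calc _ ≤ ∑ d₁ ∈ e₁.divisors, ∑ d₂ ∈ e₂.divisors, (z : ℝ) * z := by
        refine (Finset.abs_sum_le_sum_abs _ _).trans (Finset.sum_le_sum fun d₁ hd₁ => ?_)
        rw [Finset.mul_sum, ← Finset.sum_sub_distrib]
        exact (Finset.abs_sum_le_sum_abs _ _).trans (Finset.sum_le_sum fun d₂ hd₂ => bound d₁ hd₁ d₂ hd₂)
    _ = (e₁.divisors.card : ℝ) * e₂.divisors.card * (z * z) := by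
        simp [Finset.sum_const]; ring
    _ ≤ (z : ℝ) * z * (z * z) := by
        have a1 : (e₁.divisors.card : ℝ) ≤ z := by exact_mod_cast (Nat.card_divisors_le_self e₁).trans z₁
        have a2 : (e₂.divisors.card : ℝ) ≤ z := by exact_mod_cast (Nat.card_divisors_le_self e₂).trans z₂
        gcongr
    _ = _ := by ring

/-- The moduli of the sieve: the squarefree `1 ≤ e ≤ z` coprime to `q`. -/
def sieveModuli (q z : ℕ) : Finset ℕ :=
  (Finset.Icc 1 z).filter (fun e => Squarefree e ∧ Nat.Coprime e q)

/-- The denominator `S = ∑ 1 / φ(e)` of the sieve, over the moduli `e`. -/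
noncomputable def sieveSum (q z : ℕ) : ℝ := ∑ e ∈ sieveModuli q z, (e.totient : ℝ)⁻¹

lemma ramanujan_of_coprime {e a : ℕ} (he : e ≠ 0) (h : Nat.Coprime e a) :
    ramanujan e a = ArithmeticFunction.moebius e := by
  rw [ramanujan, Finset.sum_eq_single 1]
  · simp
  · intro d hd hd1
    rw [if_neg]
    intro hda
    exact hd1 (Nat.eq_one_of_dvd_coprimes h (Nat.dvd_of_mem_divisors hd) hda)
  · intro h
    exact absurd (Nat.one_mem_divisors.2 he) h

/-- Selberg's sieve for the progression `1 + k q`, `k < K`. The second moment of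
`f(k) = ∑_e μ(e) / φ(e) c_e(1 + k q)` is at most `K S + z ^ 6`, and `f(k) = S` whenever `1 + k q` is
coprime to every modulus. -/
lemma sieve_inequality (K q z : ℕ) :
    (((Finset.range K).filter (fun k => ∀ e ∈ sieveModuli q z, Nat.Coprime e (1 + k * q))).card : ℝ)
      * sieveSum q z ^ 2 ≤ K * sieveSum q z + (z : ℝ) ^ 6 := by
  set E := sieveModuli q z with hE
  have hmem : ∀ e ∈ E, e ≠ 0 ∧ e ≤ z ∧ Squarefree e ∧ Nat.Coprime e q := by
    intro e he
    simp only [hE, sieveModuli, Finset.mem_filter, Finset.mem_Icc] at he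
    exact ⟨by omega, he.1.2, he.2⟩
  have hcard : (E.card : ℝ) ≤ z := by
    have : E.card ≤ (Finset.Icc 1 z).card := Finset.card_filter_le _ _
    rw [Nat.card_Icc, Nat.add_sub_cancel] at this
    exact_mod_cast this
  have hmu : ∀ n : ℕ, |(ArithmeticFunction.moebius n : ℝ)| ≤ 1 := fun n => by
    exact_mod_cast ArithmeticFunction.abs_moebius_le_one
  set w : ℕ → ℝ := fun e => (ArithmeticFunction.moebius e : ℝ) / e.totient with hw
  set f : ℕ → ℝ := fun k => ∑ e ∈ E, w e * ramanujan e (1 + k * q) with hf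
  have hwabs : ∀ e ∈ E, |w e| ≤ 1 := by
    intro e he
    have : 0 < e.totient := Nat.totient_pos.2 (Nat.pos_of_ne_zero (hmem e he).1)
    have h1 : (1 : ℝ) ≤ e.totient := by exact_mod_cast this
    rw [hw, abs_div, Nat.abs_cast, div_le_one (by positivity)]
    exact (hmu e).trans h1
  have hwsq : ∀ e ∈ E, w e * w e * (e.totient : ℝ) = (e.totient : ℝ)⁻¹ := by
    intro e he
    have : 0 < e.totient := Nat.totient_pos.2 (Nat.pos_of_ne_zero (hmem e he).1)
    have h1 : (e.totient : ℝ) ≠ 0 := by positivity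
    have h2 : (ArithmeticFunction.moebius e : ℝ) ^ 2 = 1 := by
      exact_mod_cast ArithmeticFunction.moebius_sq_eq_one_of_squarefree (hmem e he).2.2.1
    simp only [hw]
    field_simp
    exact h2
  have lower : (((Finset.range K).filter
      (fun k => ∀ e ∈ E, Nat.Coprime e (1 + k * q))).card : ℝ) * sieveSum q z ^ 2 ≤
      ∑ k ∈ Finset.range K, f k ^ 2 := by
    rw [← nsmul_eq_mul, ← Finset.sum_const]
    refine (Finset.sum_le_sum fun k hk => ?_).trans
      (Finset.sum_le_sum_of_subset_of_nonneg (Finset.filter_subset _ _) fun k _ _ => sq_nonneg (f k))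
    apply le_of_eq
    congr 1
    rw [Finset.mem_filter] at hk
    simp only [hf, sieveSum]
    refine Finset.sum_congr rfl fun e he => ?_
    rw [ramanujan_of_coprime (hmem e he).1 (hk.2 e he)]
    have h2 : (ArithmeticFunction.moebius e : ℝ) ^ 2 = 1 := by
      exact_mod_cast ArithmeticFunction.moebius_sq_eq_one_of_squarefree (hmem e he).2.2.1
    simp only [hw]
    rw [div_mul_eq_mul_div, ← sq, h2, one_div]
  have upper : ∑ k ∈ Finset.range K, f k ^ 2 = ∑ e₁ ∈ E, ∑ e₂ ∈ E, w e₁ * w e₂ *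
      ∑ k ∈ Finset.range K, ramanujan e₁ (1 + k * q) * ramanujan e₂ (1 + k * q) := by
    simp_rw [hf, sq, Finset.sum_mul_sum, Finset.mul_sum]
    rw [Finset.sum_comm]
    refine Finset.sum_congr rfl fun e₁ _ => ?_
    rw [Finset.sum_comm]
    refine Finset.sum_congr rfl fun e₂ _ => Finset.sum_congr rfl fun k _ => ?_
    ring
  have main : ∑ e₁ ∈ E, ∑ e₂ ∈ E, w e₁ * w e₂ *
      (K * (if e₁ = e₂ then (e₁.totient : ℝ) else 0)) = K * sieveSum q z := by
    rw [sieveSum, Finset.mul_sum]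
    refine Finset.sum_congr rfl fun e₁ he₁ => ?_
    rw [Finset.sum_eq_single e₁]
    · rw [if_pos rfl, ← hwsq e₁ he₁]; ring
    · intro b _ hb
      rw [if_neg hb.symm]; ring
    · intro h; exact absurd he₁ h
  calc _ ≤ _ := lower
    _ = _ := upper
    _ ≤ ∑ e₁ ∈ E, ∑ e₂ ∈ E, (w e₁ * w e₂ *
      (K * (if e₁ = e₂ then (e₁.totient : ℝ) else 0)) + (z : ℝ) ^ 4) := by
        refine Finset.sum_le_sum fun e₁ he₁ => Finset.sum_le_sum fun e₂ he₂ => ?_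
        obtain ⟨a1, a2, a3, a4⟩ := hmem e₁ he₁
        obtain ⟨b1, b2, b3, b4⟩ := hmem e₂ he₂
        have h := sum_ramanujan_mul K a1 b1 a4 b4 a2 b2
        rw [← sub_le_iff_le_add', ← mul_sub]
        refine (le_abs_self _).trans ?_
        rw [abs_mul, abs_mul]
        calc _ ≤ 1 * 1 * (z : ℝ) ^ 4 := by
              gcongr
              · exact hwabs e₁ he₁
              · exact hwabs e₂ he₂
          _ = _ := by ring
    _ = K * sieveSum q z + E.card * E.card * (z : ℝ) ^ 4 := by
        simp_rw [Finset.sum_add_distrib]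
        rw [main]
        simp only [Finset.sum_const, nsmul_eq_mul]
        ring
    _ ≤ K * sieveSum q z + z * z * (z : ℝ) ^ 4 := by gcongr
    _ = _ := by ring

/-! ### The sieve bound for primes in the progression `1` modulo `q` -/

lemma sum_inv_sq_le_two (z : ℕ) : ∑ b ∈ Finset.Icc 1 z, ((b : ℝ) ^ 2)⁻¹ ≤ 2 := by
  rcases Nat.eq_zero_or_pos z with rfl | hz
  · simp
  have h : Finset.Icc 1 z = insert 1 (Finset.Ioc 1 z) := by
    ext b; simp only [Finset.mem_Icc, Finset.mem_insert, Finset.mem_Ioc]; omega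
  rw [h, Finset.sum_insert (by simp)]
  have h1 := sum_Ioc_inv_sq_le_sub (α := ℝ) one_ne_zero hz
  have h2 : (0 : ℝ) ≤ (z : ℝ)⁻¹ := by positivity
  norm_num at h1 ⊢
  linarith

lemma exists_sieve_decomposition {q n z : ℕ} (hq : q.Prime) (hn : n ∈ Finset.Icc 1 z) :
    ∃ t ∈ sieveModuli q z ×ˢ Finset.Icc 1 z ×ˢ Finset.range 2,
      n = t.1 * t.2.1 ^ 2 * q ^ t.2.2 := by
  rw [Finset.mem_Icc] at hn
  obtain ⟨a, b, hab, ha⟩ := Nat.sq_mul_squarefree n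
  have hn0 : n ≠ 0 := by omega
  have hb0 : b ≠ 0 := by rintro rfl; apply hn0; rw [← hab]; simp
  have ha0 : a ≠ 0 := ha.ne_zero
  have hbn : b ≤ z := by
    have : b ∣ n := hab ▸ (dvd_pow_self b two_ne_zero).mul_right a
    exact (Nat.le_of_dvd (by omega) this).trans hn.2
  have han : a ≤ z := by
    have : a ∣ n := hab ▸ Dvd.intro_left _ rfl
    exact (Nat.le_of_dvd (by omega) this).trans hn.2
  by_cases hqa : q ∣ a
  · obtain ⟨c, rfl⟩ := hqa
    have hc0 : c ≠ 0 := right_ne_zero_of_mul ha0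
    have hc : c ≤ z := (Nat.le_mul_of_pos_left c hq.pos).trans han
    refine ⟨(c, b, 1), ?_, ?_⟩
    · simp only [Finset.mem_product, sieveModuli, Finset.mem_filter, Finset.mem_Icc,
        Finset.mem_range]
      exact ⟨⟨⟨by omega, hc⟩, ha.squarefree_of_dvd (Dvd.intro_left q rfl),
        (Nat.coprime_of_squarefree_mul ha).symm⟩, ⟨by omega, hbn⟩, by omega⟩
    · simp only; rw [← hab]; ring
  · refine ⟨(a, b, 0), ?_, ?_⟩
    · simp only [Finset.mem_product, sieveModuli, Finset.mem_filter, Finset.mem_Icc,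
        Finset.mem_range]
      exact ⟨⟨⟨by omega, han⟩, ha, ((hq.coprime_iff_not_dvd).2 hqa).symm⟩,
        ⟨by omega, hbn⟩, by omega⟩
    · simp only; rw [← hab]; ring

/-- Every `n ≤ z` is `a b ^ 2 q ^ i` with `a` a sieve modulus, `b ≤ z` and `i < 2`; the sums over `b`
and `i` are both at most `2`, and `1 / a ≤ 1 / φ(a)`. -/
lemma harmonic_le_sieveSum {q : ℕ} (hq : q.Prime) (z : ℕ) :
    ∑ n ∈ Finset.Icc 1 z, (n : ℝ)⁻¹ ≤ 4 * sieveSum q z := by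
  classical
  set T := sieveModuli q z ×ˢ Finset.Icc 1 z ×ˢ Finset.range 2 with hT
  have hex : ∀ n, ∃ t, n ∈ Finset.Icc 1 z → t ∈ T ∧ n = t.1 * t.2.1 ^ 2 * q ^ t.2.2 := by
    intro n
    by_cases hn : n ∈ Finset.Icc 1 z
    · obtain ⟨t, h1, h2⟩ := exists_sieve_decomposition hq hn
      exact ⟨t, fun _ => ⟨h1, h2⟩⟩
    · exact ⟨(0, 0, 0), fun h => absurd h hn⟩
  choose τ hτ using hex
  have hS : 0 ≤ sieveSum q z := Finset.sum_nonneg fun _ _ => by positivity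
  have hq2 : (2 : ℝ) ≤ q := by exact_mod_cast hq.two_le
  have hqinv : (q : ℝ)⁻¹ ≤ 1 := inv_le_one_of_one_le₀ (by linarith)
  calc ∑ n ∈ Finset.Icc 1 z, (n : ℝ)⁻¹
      = ∑ n ∈ Finset.Icc 1 z,
        (((τ n).1 : ℝ)⁻¹ * ((((τ n).2.1 : ℝ) ^ 2)⁻¹ * ((q : ℝ) ^ (τ n).2.2)⁻¹)) := by
        refine Finset.sum_congr rfl fun n hn => ?_
        conv_lhs => rw [(hτ n hn).2]
        push_cast
        rw [mul_inv, mul_inv, mul_assoc]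
    _ = ∑ t ∈ (Finset.Icc 1 z).image τ,
        ((t.1 : ℝ)⁻¹ * (((t.2.1 : ℝ) ^ 2)⁻¹ * ((q : ℝ) ^ t.2.2)⁻¹)) := by
        rw [Finset.sum_image]
        intro a ha b hb hab
        rw [(hτ a ha).2, (hτ b hb).2, hab]
    _ ≤ ∑ t ∈ T, ((t.1 : ℝ)⁻¹ * (((t.2.1 : ℝ) ^ 2)⁻¹ * ((q : ℝ) ^ t.2.2)⁻¹)) := by
        apply Finset.sum_le_sum_of_subset_of_nonneg
        · intro t ht
          obtain ⟨n, hn, rfl⟩ := Finset.mem_image.1 ht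
          exact (hτ n hn).1
        · intros; positivity
    _ = (∑ e ∈ sieveModuli q z, (e : ℝ)⁻¹) * ((∑ b ∈ Finset.Icc 1 z, ((b : ℝ) ^ 2)⁻¹) *
        ∑ i ∈ Finset.range 2, ((q : ℝ) ^ i)⁻¹) := by
        rw [hT, Finset.sum_product, Finset.sum_mul_sum, Finset.sum_mul_sum]
        refine Finset.sum_congr rfl fun e _ => ?_
        rw [Finset.sum_product]
        refine Finset.sum_congr rfl fun b _ => ?_
        rw [Finset.mul_sum]
    _ ≤ sieveSum q z * (2 * 2) := by
        gcongr
        · refine Finset.sum_le_sum fun e he => ?_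
          simp only [sieveModuli, Finset.mem_filter, Finset.mem_Icc] at he
          have h1 : 0 < e.totient := Nat.totient_pos.2 (by omega)
          have h2 : (e.totient : ℝ) ≤ e := by exact_mod_cast Nat.totient_le e
          have h3 : (0 : ℝ) < e.totient := by exact_mod_cast h1
          gcongr
        · exact sum_inv_sq_le_two z
        · simp [Finset.sum_range_succ]; linarith
    _ = _ := by ring

/-- A Brun–Titchmarsh type bound, uniform in the prime `q`. The sieving level is
`z = 2 ^ ⌊j / 12⌋`, so that the error `z ^ 6` is at most `2 ^ (j / 2)`. -/
lemma card_primes_progression {q : ℕ} (hq : q.Prime) {j : ℕ} (hj : 1 ≤ j) :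
    (((Finset.range (2 ^ j)).filter (fun k => (1 + k * q).Prime)).card : ℝ) ≤
      630 * 2 ^ j / j := by
  set z := 2 ^ (j / 12) with hz
  set S := sieveSum q z with hS
  set H : ℝ := ∑ n ∈ Finset.Icc 1 z, (n : ℝ)⁻¹ with hH
  have hz1 : 1 ≤ z := Nat.one_le_two_pow
  have hHS : H ≤ 4 * S := harmonic_le_sieveSum hq z
  have hHh : H = ((harmonic z : ℚ) : ℝ) := by
    rw [harmonic_eq_sum_Icc]; push_cast; rfl
  have hH1 : 1 ≤ H := by
    have := Finset.single_le_sum (f := fun n : ℕ => (n : ℝ)⁻¹) (s := Finset.Icc 1 z)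
      (fun _ _ => by positivity) (Finset.mem_Icc.2 ⟨le_refl 1, hz1⟩)
    simpa using this
  have hHz : H ≤ z := by
    have : H ≤ ∑ n ∈ Finset.Icc 1 z, (1 : ℝ) := by
      refine Finset.sum_le_sum fun n hn => ?_
      have : (1 : ℝ) ≤ n := by exact_mod_cast (Finset.mem_Icc.1 hn).1
      exact inv_le_one_of_one_le₀ this
    simpa using this
  have hHlog : ((j / 12 : ℕ) : ℝ) * Real.log 2 ≤ H := by
    rw [hHh]
    refine le_trans ?_ (log_add_one_le_harmonic z)
    rw [← Real.log_pow]
    apply Real.log_le_log (by positivity)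
    rw [hz]; push_cast; linarith
  have hjH : (j : ℝ) ≤ 30 * H := by
    have h1 : (j : ℝ) ≤ 12 * ((j / 12 : ℕ) : ℝ) + 11 := by
      exact_mod_cast (by omega : j ≤ 12 * (j / 12) + 11)
    have h2 := Real.log_two_gt_d9
    have h3 : (0 : ℝ) ≤ ((j / 12 : ℕ) : ℝ) := by positivity
    nlinarith
  have hK6 : (z : ℝ) ^ 6 ≤ 2 ^ j := by
    rw [hz]; push_cast; rw [← pow_mul]
    exact pow_le_pow_right₀ (by norm_num) (by omega)
  have hK2 : (z : ℝ) ^ 2 ≤ 2 ^ j := by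
    rw [hz]; push_cast; rw [← pow_mul]
    exact pow_le_pow_right₀ (by norm_num) (by omega)
  set A : ℝ := (((Finset.range (2 ^ j)).filter
    (fun k => ∀ e ∈ sieveModuli q z, Nat.Coprime e (1 + k * q))).card : ℝ) with hA
  have hA0 : 0 ≤ A := by positivity
  have hsieve : A * S ^ 2 ≤ 2 ^ j * S + (z : ℝ) ^ 6 := by
    have := sieve_inequality (2 ^ j) q z
    push_cast at this
    exact this
  have hsub : (((Finset.range (2 ^ j)).filter (fun k => (1 + k * q).Prime)).card : ℝ) ≤ A + z := by
    have : ((Finset.range (2 ^ j)).filter (fun k => (1 + k * q).Prime)) ⊆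
        ((Finset.range (2 ^ j)).filter (fun k => ∀ e ∈ sieveModuli q z, Nat.Coprime e (1 + k * q)))
        ∪ Finset.range z := by
      intro k hk
      rw [Finset.mem_filter] at hk
      rw [Finset.mem_union, Finset.mem_filter, Finset.mem_range (m := k) (n := z)]
      -- A prime `1 + k q > z` is coprime to every modulus `e ≤ z`.
      by_cases hkz : k < z
      · exact Or.inr hkz
      left
      refine ⟨hk.1, fun e he => ?_⟩
      simp only [sieveModuli, Finset.mem_filter, Finset.mem_Icc] at he
      refine Nat.Coprime.symm ((hk.2.coprime_iff_not_dvd).2 fun hd => ?_)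
      have h1 := Nat.le_of_dvd (by omega) hd
      have h2 : k ≤ k * q := Nat.le_mul_of_pos_right k hq.pos
      omega
    have h := (Finset.card_le_card this).trans (Finset.card_union_le _ _)
    rw [Finset.card_range] at h
    rw [hA]
    exact_mod_cast h
  have hj0 : (0 : ℝ) < j := by exact_mod_cast hj
  rw [le_div_iff₀ hj0]
  have hSpos : 0 < S := by linarith
  have hP : (0 : ℝ) < 2 ^ j := by positivity
  have hAS : A * S ≤ 5 * 2 ^ j := by
    have h4 : 1 ≤ 4 * S := by linarith
    have : (A * S) * S ≤ (5 * 2 ^ j) * S := by nlinarith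
    exact le_of_mul_le_mul_right this hSpos
  have hAj : A * j ≤ 600 * 2 ^ j := by
    have : A * j ≤ A * (120 * S) := by gcongr; linarith
    linarith
  have hzj : (z : ℝ) * j ≤ 30 * 2 ^ j := by
    have h0 : (0 : ℝ) ≤ z := by positivity
    have : (z : ℝ) * j ≤ z * (30 * z) := by gcongr; linarith
    nlinarith
  nlinarith

/-- Dyadic summation: by `card_primes_progression` the block `2 ^ J ≤ k < 2 ^ (J + 1)` contributes
`O(1 / (J + 1))`. -/
lemma sum_inv_dyadic {q : ℕ} (hq : q.Prime) (J : ℕ) :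
    ∑ k ∈ (Finset.Ico 1 (2 ^ J)).filter (fun k => (1 + k * q).Prime), (k : ℝ)⁻¹ ≤
      1260 * (harmonic J : ℝ) := by
  induction J with
  | zero => simp
  | succ J ih =>
    have hsplit : (Finset.Ico 1 (2 ^ (J + 1))).filter (fun k => (1 + k * q).Prime) ⊆
        (Finset.Ico 1 (2 ^ J)).filter (fun k => (1 + k * q).Prime) ∪
        (Finset.Ico (2 ^ J) (2 ^ (J + 1))).filter (fun k => (1 + k * q).Prime) := by
      intro k hk
      simp only [Finset.mem_filter, Finset.mem_Ico, Finset.mem_union] at hk ⊢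
      by_cases h : k < 2 ^ J
      · exact Or.inl ⟨⟨hk.1.1, h⟩, hk.2⟩
      · exact Or.inr ⟨⟨not_lt.1 h, hk.1.2⟩, hk.2⟩
    have hdisj : Disjoint ((Finset.Ico 1 (2 ^ J)).filter (fun k => (1 + k * q).Prime))
        ((Finset.Ico (2 ^ J) (2 ^ (J + 1))).filter (fun k => (1 + k * q).Prime)) := by
      rw [Finset.disjoint_left]
      intro k h1 h2
      simp only [Finset.mem_filter, Finset.mem_Ico] at h1 h2
      omega
    have hnew : ∑ k ∈ (Finset.Ico (2 ^ J) (2 ^ (J + 1))).filter (fun k => (1 + k * q).Prime),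
        (k : ℝ)⁻¹ ≤ 1260 * ((J + 1 : ℕ) : ℝ)⁻¹ := by
      calc _ ≤ ∑ k ∈ (Finset.Ico (2 ^ J) (2 ^ (J + 1))).filter (fun k => (1 + k * q).Prime),
            ((2 : ℝ) ^ J)⁻¹ := by
            refine Finset.sum_le_sum fun k hk => ?_
            simp only [Finset.mem_filter, Finset.mem_Ico] at hk
            have : (2 : ℝ) ^ J ≤ k := by exact_mod_cast hk.1.1
            gcongr
        _ ≤ ((Finset.range (2 ^ (J + 1))).filter (fun k => (1 + k * q).Prime)).card *
            ((2 : ℝ) ^ J)⁻¹ := by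
            rw [Finset.sum_const, nsmul_eq_mul]
            gcongr
            intro k hk
            simpa using (Finset.mem_Ico.1 hk).2
        _ ≤ 630 * 2 ^ (J + 1) / ((J + 1 : ℕ) : ℝ) * ((2 : ℝ) ^ J)⁻¹ := by
            gcongr
            exact card_primes_progression hq (Nat.le_add_left 1 J)
        _ = _ := by
            have : (2 : ℝ) ^ J ≠ 0 := by positivity
            rw [pow_succ]; field_simp; norm_num
    rw [harmonic_succ]
    push_cast at hnew ⊢
    refine (Finset.sum_le_sum_of_subset_of_nonneg hsplit fun _ _ _ => by positivity).trans ?_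
    rw [Finset.sum_union hdisj]
    linarith

/-- The bound `∑ 1 / p ≪ log log x / q` over the primes `p ≤ x` with `p ≡ 1 (mod q)`. -/
lemma sum_inv_primes_progression {q : ℕ} (hq : q.Prime) {x : ℝ}
    (hx1 : 1 < x) (hlog : 1 < Real.log x) (hy2 : 2 ≤ Real.log (Real.log x)) :
    ∑ p ∈ (Finset.Icc 1 ⌊x⌋₊).filter (fun p => p.Prime ∧ q ∣ p - 1), (p : ℝ)⁻¹ ≤
      2520 * Real.log (Real.log x) / q := by
  set y := Real.log (Real.log x) with hy
  set N := ⌊x⌋₊ with hN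
  have hN1 : 1 ≤ N := Nat.le_floor (by simpa using hx1.le)
  set J := Nat.log 2 N + 1 with hJ
  have hNJ : N < 2 ^ J := Nat.lt_pow_succ_log_self (by norm_num) N
  have hqpos : (0 : ℝ) < q := by exact_mod_cast hq.pos
  have hJy : (harmonic J : ℝ) ≤ 2 * y := by
    have h1 := harmonic_le_one_add_log J
    have h2 : ((Nat.log 2 N : ℕ) : ℝ) * Real.log 2 ≤ Real.log x := by
      rw [← Real.log_pow]
      apply Real.log_le_log (by positivity)
      have h3 : ((2 ^ Nat.log 2 N : ℕ) : ℝ) ≤ N := by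
        exact_mod_cast Nat.pow_log_le_self 2 (by omega)
      push_cast at h3
      exact h3.trans (Nat.floor_le (by linarith))
    have h3 : (J : ℝ) ≤ Real.exp 1 * Real.log x := by
      have h4 := Real.exp_one_gt_d9
      have h5 := Real.log_two_gt_d9
      have h6 : (0 : ℝ) ≤ ((Nat.log 2 N : ℕ) : ℝ) := by positivity
      rw [hJ]; push_cast
      nlinarith
    have h4 : Real.log J ≤ 1 + y := by
      have h5 := Real.log_le_log (by rw [hJ]; positivity) h3
      rwa [Real.log_mul (Real.exp_ne_zero 1) (by linarith), Real.log_exp] at h5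
    linarith
  calc ∑ p ∈ (Finset.Icc 1 N).filter (fun p => p.Prime ∧ q ∣ p - 1), (p : ℝ)⁻¹
      ≤ ∑ p ∈ ((Finset.Ico 1 (2 ^ J)).filter (fun k => (1 + k * q).Prime)).image
          (fun k => 1 + k * q), (p : ℝ)⁻¹ := by
        refine Finset.sum_le_sum_of_subset_of_nonneg ?_ fun _ _ _ => by positivity
        intro p hp
        simp only [Finset.mem_filter, Finset.mem_Icc] at hp
        obtain ⟨⟨_, hpN⟩, hp, k, hk⟩ := hp
        have h2 := hp.two_le
        have hpk : p = 1 + k * q := by rw [mul_comm k q]; omega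
        simp only [Finset.mem_image, Finset.mem_filter, Finset.mem_Ico]
        refine ⟨k, ⟨⟨?_, ?_⟩, hpk ▸ hp⟩, hpk.symm⟩
        · rcases Nat.eq_zero_or_pos k with rfl | h
          · simp at hpk; omega
          · exact h
        · have : k ≤ k * q := Nat.le_mul_of_pos_right k hq.pos
          omega
    _ ≤ ∑ k ∈ (Finset.Ico 1 (2 ^ J)).filter (fun k => (1 + k * q).Prime),
          (k : ℝ)⁻¹ * (q : ℝ)⁻¹ := by
        rw [Finset.sum_image]
        · refine Finset.sum_le_sum fun k hk => ?_
          simp only [Finset.mem_filter, Finset.mem_Ico] at hk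
          have hk0 : (0 : ℝ) < k := by exact_mod_cast hk.1.1
          rw [← mul_inv]
          push_cast
          gcongr
          linarith
        · intro a _ b _ hab
          exact Nat.eq_of_mul_eq_mul_right hq.pos (Nat.add_left_cancel hab)
    _ ≤ 1260 * (harmonic J : ℝ) * (q : ℝ)⁻¹ := by
        rw [← Finset.sum_mul]
        gcongr
        exact sum_inv_dyadic hq J
    _ ≤ 1260 * (2 * y) * (q : ℝ)⁻¹ := by gcongr
    _ = _ := by rw [div_eq_mul_inv]; ring

/-! ### Reciprocal squares of large primes -/

/-- The factor `1 - 1 / 2 ^ J` carries the induction: the primes in `(2 ^ J Y, 2 ^ (J + 1) Y]`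
contribute at most `θ(2 ^ (J + 1) Y) / (2 ^ J Y) ^ 2 ≤ 4 log 4 / (2 ^ (J + 1) Y)`. -/
lemma sum_log_div_sq (Q : Finset ℕ) {Y : ℝ} (hY : 1 < Y)
    (hQ : ∀ q ∈ Q, q.Prime ∧ Y < q) (J : ℕ) :
    ∑ q ∈ Q.filter (fun q : ℕ => (q : ℝ) ≤ 2 ^ J * Y), Real.log q / (q : ℝ) ^ 2 ≤
      4 * Real.log 4 / Y * (1 - 1 / 2 ^ J) := by
  induction J with
  | zero =>
    rw [Finset.filter_eq_empty_iff.2]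
    · simp
    · intro q hq
      simpa using (hQ q hq).2
  | succ J ih =>
    have hP : (0 : ℝ) < 2 ^ J := by positivity
    have hM : (0 : ℝ) < 2 ^ J * Y := by positivity
    have hsplit : Q.filter (fun q : ℕ => (q : ℝ) ≤ 2 ^ (J + 1) * Y) ⊆
        Q.filter (fun q : ℕ => (q : ℝ) ≤ 2 ^ J * Y) ∪
        Q.filter (fun q : ℕ => 2 ^ J * Y < (q : ℝ) ∧ (q : ℝ) ≤ 2 ^ (J + 1) * Y) := by
      intro k hk
      simp only [Finset.mem_filter, Finset.mem_union] at hk ⊢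
      by_cases h : (k : ℝ) ≤ 2 ^ J * Y
      · exact Or.inl ⟨hk.1, h⟩
      · exact Or.inr ⟨hk.1, not_le.1 h, hk.2⟩
    have hdisj : Disjoint (Q.filter (fun q : ℕ => (q : ℝ) ≤ 2 ^ J * Y))
        (Q.filter (fun q : ℕ => 2 ^ J * Y < (q : ℝ) ∧ (q : ℝ) ≤ 2 ^ (J + 1) * Y)) := by
      rw [Finset.disjoint_left]
      intro k h1 h2
      simp only [Finset.mem_filter] at h1 h2
      linarith [h1.2, h2.2.1]
    have hnew : ∑ q ∈ Q.filter (fun q : ℕ => 2 ^ J * Y < (q : ℝ) ∧ (q : ℝ) ≤ 2 ^ (J + 1) * Y),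
        Real.log q / (q : ℝ) ^ 2 ≤ 4 * Real.log 4 / Y * (1 / 2 ^ (J + 1)) := by
      calc _ ≤ ∑ q ∈ Q.filter (fun q : ℕ => 2 ^ J * Y < (q : ℝ) ∧ (q : ℝ) ≤ 2 ^ (J + 1) * Y),
            Real.log q / (2 ^ J * Y) ^ 2 := by
            refine Finset.sum_le_sum fun q hq => ?_
            simp only [Finset.mem_filter] at hq
            have : 0 ≤ Real.log q := Real.log_natCast_nonneg q
            have h1 := hq.2.1.le
            gcongr
        _ ≤ Chebyshev.theta (2 ^ (J + 1) * Y) / (2 ^ J * Y) ^ 2 := by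
            rw [← Finset.sum_div]
            gcongr
            rw [Chebyshev.theta]
            refine Finset.sum_le_sum_of_subset_of_nonneg ?_
              fun q _ _ => Real.log_natCast_nonneg q
            intro q hq
            simp only [Finset.mem_filter, Finset.mem_Ioc] at hq ⊢
            exact ⟨⟨(hQ q hq.1).1.pos, Nat.le_floor hq.2.2⟩, (hQ q hq.1).1⟩
        _ ≤ (Real.log 4 * (2 ^ (J + 1) * Y)) / (2 ^ J * Y) ^ 2 := by
            gcongr
            exact Chebyshev.theta_le_log4_mul_x (by positivity)
        _ = _ := by
            rw [pow_succ]; field_simp; norm_num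
    refine (Finset.sum_le_sum_of_subset_of_nonneg hsplit fun q _ _ =>
      div_nonneg (Real.log_natCast_nonneg q) (by positivity)).trans ?_
    rw [Finset.sum_union hdisj]
    have : 4 * Real.log 4 / Y * (1 - 1 / 2 ^ (J + 1)) =
      4 * Real.log 4 / Y * (1 - 1 / 2 ^ J) + 4 * Real.log 4 / Y * (1 / 2 ^ (J + 1)) := by
      rw [pow_succ]; field_simp; ring
    linarith

lemma sum_inv_sq_primes (Q : Finset ℕ) {Y : ℝ} (hY : 1 < Y)
    (hQ : ∀ q ∈ Q, q.Prime ∧ Y < q) :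
    ∑ q ∈ Q, ((q : ℝ) ^ 2)⁻¹ ≤ 4 * Real.log 4 / (Y * Real.log Y) := by
  obtain ⟨J, hJ⟩ := pow_unbounded_of_one_lt (∑ q ∈ Q, (q : ℝ)) (one_lt_two)
  have hlY : 0 < Real.log Y := Real.log_pos hY
  have hall : Q.filter (fun q : ℕ => (q : ℝ) ≤ 2 ^ J * Y) = Q := by
    rw [Finset.filter_eq_self]
    intro q hq
    have h1 := Finset.single_le_sum (f := fun q : ℕ => (q : ℝ)) (fun _ _ => by positivity) hq
    have hP : (0 : ℝ) < 2 ^ J := by positivity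
    nlinarith
  have h := sum_log_div_sq Q hY hQ J
  rw [hall] at h
  have h2 : (∑ q ∈ Q, ((q : ℝ) ^ 2)⁻¹) * Real.log Y ≤ ∑ q ∈ Q, Real.log q / (q : ℝ) ^ 2 := by
    rw [Finset.sum_mul]
    refine Finset.sum_le_sum fun q hq => ?_
    rw [div_eq_inv_mul]
    gcongr
    exact (hQ q hq).2.le
  have h3 : 4 * Real.log 4 / Y * (1 - 1 / 2 ^ J) ≤ 4 * Real.log 4 / Y := by
    have h4 : 0 ≤ 4 * Real.log 4 / Y := by
      have : 0 ≤ Real.log 4 := Real.log_nonneg (by norm_num)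
      positivity
    have h5 : (0 : ℝ) ≤ 1 / 2 ^ J := by positivity
    nlinarith
  rw [← div_div, le_div_iff₀ hlY]
  linarith

/-! ### Counting the exceptional integers -/

lemma card_multiples_le (N d : ℕ) :
    (((Finset.Icc 1 N).filter (fun n => d ∣ n)).card : ℝ) ≤ N * (d : ℝ)⁻¹ := by
  have h : Finset.Icc 1 N = Finset.Ioc 0 N := rfl
  rw [h, Nat.Ioc_filter_dvd_card_eq_div, ← div_eq_mul_inv]
  exact Nat.cast_div_le

/-- Union bound over the primes `q` and the two cases of `bad_structure`; `T q` is any upper bound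
for the sum of `1 / p` over the primes `p ≤ N` with `p ≡ 1 (mod q)`. -/
lemma exceptional_card_le (N : ℕ) {Y : ℝ} (T : ℕ → ℝ)
    (hT : ∀ q : ℕ, q.Prime →
      ∑ p ∈ (Finset.Icc 1 N).filter (fun p => p.Prime ∧ q ∣ p - 1), (p : ℝ)⁻¹ ≤ T q) :
    (Set.ncard {n : ℕ | 1 ≤ n ∧ n ≤ N ∧ ∃ q : ℕ, q.Prime ∧ Y < (q : ℝ) ∧
      q ∣ Nat.totient (Nat.totient n) ∧ ¬ q ∣ lam (lam n)} : ℝ) ≤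
    N * ∑ q ∈ (Finset.Icc 1 N).filter (fun q : ℕ => q.Prime ∧ Y < (q : ℝ)),
      (((q : ℝ) ^ 2)⁻¹ + T q ^ 2) := by
  classical
  set Q := (Finset.Icc 1 N).filter (fun q : ℕ => q.Prime ∧ Y < (q : ℝ)) with hQ
  set P : ℕ → Finset ℕ := fun q => (Finset.Icc 1 N).filter (fun p => p.Prime ∧ q ∣ p - 1) with hP
  set M : ℕ → Finset ℕ := fun d => (Finset.Icc 1 N).filter (fun n => d ∣ n) with hM
  have hsub : {n : ℕ | 1 ≤ n ∧ n ≤ N ∧ ∃ q : ℕ, q.Prime ∧ Y < (q : ℝ) ∧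
      q ∣ Nat.totient (Nat.totient n) ∧ ¬ q ∣ lam (lam n)} ⊆
      ((Q.biUnion fun q => M (q ^ 2) ∪ (P q ×ˢ P q).biUnion fun t => M (t.1 * t.2) :
        Finset ℕ) : Set ℕ) := by
    rintro n ⟨hn1, hnN, q, hq, hYq, h1, h2⟩
    have hn0 : n ≠ 0 := by omega
    have hQmem : q ≤ N → q ∈ Q := fun h => by
      rw [hQ, Finset.mem_filter, Finset.mem_Icc]
      exact ⟨⟨hq.pos, h⟩, hq, hYq⟩
    have hMmem : ∀ d, d ∣ n → n ∈ M d := fun d hd => by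
      rw [hM, Finset.mem_filter, Finset.mem_Icc]
      exact ⟨⟨hn1, hnN⟩, hd⟩
    rw [Finset.mem_coe, Finset.mem_biUnion]
    rcases bad_structure hq hn0 h1 h2 with h | ⟨p₁, p₂, hp₁, hp₂, hne, hd₁, hd₂, hq₁, hq₂⟩
    · have hqn := Nat.le_of_dvd hn1 ((dvd_pow_self q two_ne_zero).trans h)
      exact ⟨q, hQmem (hqn.trans hnN), Finset.mem_union_left _ (hMmem _ h)⟩
    · have l₁ := (Nat.le_of_dvd hn1 hd₁).trans hnN
      have l₂ := (Nat.le_of_dvd hn1 hd₂).trans hnN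
      have hqp := Nat.le_of_dvd (Nat.sub_pos_of_lt hp₁.one_lt) hq₁
      refine ⟨q, hQmem (by omega), Finset.mem_union_right _ ?_⟩
      rw [Finset.mem_biUnion]
      refine ⟨(p₁, p₂), ?_, hMmem _ ?_⟩
      · simp only [hP, Finset.mem_product, Finset.mem_filter, Finset.mem_Icc]
        exact ⟨⟨⟨hp₁.one_le, l₁⟩, hp₁, hq₁⟩, ⟨hp₂.one_le, l₂⟩, hp₂, hq₂⟩
      · exact Nat.Coprime.mul_dvd_of_dvd_of_dvd ((Nat.coprime_primes hp₁ hp₂).2 hne) hd₁ hd₂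
  have hcard := Set.ncard_le_ncard hsub (Finset.finite_toSet _)
  rw [Set.ncard_coe_finset] at hcard
  refine (Nat.cast_le.2 hcard).trans ?_
  refine (Nat.cast_le.2 Finset.card_biUnion_le).trans ?_
  push_cast
  rw [Finset.mul_sum]
  refine Finset.sum_le_sum fun q hq => ?_
  have hqp : q.Prime := (Finset.mem_filter.1 hq).2.1
  have hPT : (∑ p ∈ P q, (p : ℝ)⁻¹) ≤ T q := hT q hqp
  have hP0 : 0 ≤ ∑ p ∈ P q, (p : ℝ)⁻¹ := Finset.sum_nonneg fun _ _ => by positivity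
  refine (Nat.cast_le.2 (Finset.card_union_le _ _)).trans ?_
  push_cast
  rw [mul_add]
  refine add_le_add ?_ ?_
  · have := card_multiples_le N (q ^ 2)
    push_cast at this
    exact this
  · calc (((P q ×ˢ P q).biUnion fun t => M (t.1 * t.2)).card : ℝ)
        ≤ ∑ t ∈ P q ×ˢ P q, ((M (t.1 * t.2)).card : ℝ) := by
          exact_mod_cast Finset.card_biUnion_le
      _ ≤ ∑ t ∈ P q ×ˢ P q, (N : ℝ) * ((t.1 : ℝ)⁻¹ * (t.2 : ℝ)⁻¹) := by
          refine Finset.sum_le_sum fun t _ => ?_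
          have := card_multiples_le N (t.1 * t.2)
          push_cast at this
          rwa [mul_inv] at this
      _ = N * (∑ p ∈ P q, (p : ℝ)⁻¹) ^ 2 := by
          rw [← Finset.mul_sum, sq, Finset.sum_mul_sum, Finset.sum_product]
      _ ≤ _ := by gcongr

/-- For almost all `n ≤ x`, the prime divisors of `φ(φ(n))` and `λ(λ(n))` exceeding
`(log log x)²` are identical: the number of exceptional `n ≤ x` is
`O(x / log log log x)`. -/
theorem same_large_prime_divisors :
    ∃ C : ℝ, 0 < C ∧ ∀ x : ℝ, Real.exp (Real.exp (Real.exp 1)) < x →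
      (Set.ncard {n : ℕ | 1 ≤ n ∧ (n : ℝ) ≤ x ∧ ∃ q : ℕ, q.Prime ∧
        (Real.log (Real.log x))^2 < (q : ℝ) ∧
        q ∣ Nat.totient (Nat.totient n) ∧ ¬ q ∣ lam (lam n)} : ℝ) ≤
      C * x / Real.log (Real.log (Real.log x)) := by
  have hl4 : 0 < Real.log 4 := Real.log_pos (by norm_num)
  refine ⟨(1 + 2520 ^ 2) * (2 * Real.log 4), by positivity, fun x hx => ?_⟩
  have hx0 : 0 < x := (Real.exp_pos _).trans hx
  have he : 2 < Real.exp 1 := by linarith [Real.exp_one_gt_d9]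
  have hL : Real.exp (Real.exp 1) < Real.log x := (Real.lt_log_iff_exp_lt hx0).2 hx
  have hL0 : 0 < Real.log x := (Real.exp_pos _).trans hL
  have hy : Real.exp 1 < Real.log (Real.log x) := (Real.lt_log_iff_exp_lt hL0).2 hL
  have hL1 : 1 < Real.log x :=
    (Real.one_lt_exp_iff.2 (Real.exp_pos 1)).trans hL
  have hx1 : 1 < x := (Real.one_lt_exp_iff.2 (Real.exp_pos _)).trans hx
  have hsum := fun (q : ℕ) (hq : q.Prime) => sum_inv_primes_progression (q := q) (x := x) hq
  set y := Real.log (Real.log x) with hy_def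
  have hy2 : 2 < y := he.trans hy
  have hw : 1 < Real.log y := (Real.lt_log_iff_exp_lt (by linarith)).2 hy
  have hset : {n : ℕ | 1 ≤ n ∧ (n : ℝ) ≤ x ∧ ∃ q : ℕ, q.Prime ∧ y ^ 2 < (q : ℝ) ∧
        q ∣ Nat.totient (Nat.totient n) ∧ ¬ q ∣ lam (lam n)} =
      {n : ℕ | 1 ≤ n ∧ n ≤ ⌊x⌋₊ ∧ ∃ q : ℕ, q.Prime ∧ y ^ 2 < (q : ℝ) ∧
        q ∣ Nat.totient (Nat.totient n) ∧ ¬ q ∣ lam (lam n)} := by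
    ext n
    simp only [Set.mem_ofPred_eq, Nat.le_floor_iff hx0.le]
  rw [hset]
  refine (exceptional_card_le ⌊x⌋₊ (fun q => 2520 * y / q)
    (fun q hq => hsum q hq hx1 hL1 hy2.le)).trans ?_
  have hY : 1 < y ^ 2 := by nlinarith
  have htail := sum_inv_sq_primes
    ((Finset.Icc 1 ⌊x⌋₊).filter (fun q : ℕ => q.Prime ∧ y ^ 2 < (q : ℝ))) hY
    (fun q hq => (Finset.mem_filter.1 hq).2)
  have hrw : ∀ q : ℕ, ((q : ℝ) ^ 2)⁻¹ + (2520 * y / q) ^ 2 =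
      (1 + 2520 ^ 2 * y ^ 2) * ((q : ℝ) ^ 2)⁻¹ := fun q => by
    rw [div_pow, div_eq_mul_inv]; ring
  simp_rw [hrw]
  rw [← Finset.mul_sum]
  calc _ ≤ x * ((1 + 2520 ^ 2) * y ^ 2 * (4 * Real.log 4 / (y ^ 2 * Real.log (y ^ 2)))) := by
        have := Nat.floor_le hx0.le
        gcongr
        nlinarith
    _ = _ := by
        have h1 : y ≠ 0 := by linarith
        have h2 : Real.log y ≠ 0 := by linarith
        rw [Real.log_pow]
        push_cast
        field_simp
        ring
end

section
/- Let ψ : ℝ → ℝ be any function with ψ(x) → ∞ as x → ∞. Then the number of integers n ≤ x such that Σ_{q prime, q > (log log x)², v_q(φ(φ(n))) ≥ 2} v_q(φ(φ(n)))·log q > ψ(x)·(log log x)² is o(x) as x → ∞. -/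
/-! Write `y = log log x`. Everything rests on the bound, uniform in `d`,

  `∑_{p ≤ x, p ≡ 1 mod d} 1 / p ≪ y / d`   for `d` with `∑_{p ∣ d} 1 / p ≤ 1 / 2`,

which is needed only for `d` a prime, the square of a prime, or a product of two primes, all the
primes being larger than `4`. It is `recipBound_of_large`. It follows by dyadic summation over
`m = (p - 1) / d` from an upper bound `≪ 2 ^ j / (j + 1)` for the number of
`m ∈ [2 ^ j, 2 ^ (j + 1))` with `d * m + 1` prime (`dyadic_card_le`). That bound comes from
a sieve of Selberg type (`sieve_card_le`). The weights are chosen so that the quadratic form is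
diagonalised with values `μ k / k`, instead of the optimal values: this costs nothing in the order
of magnitude, and reduces the lower bound for the main term to
`∑_{n ≤ z, (n, d) = 1} 1 / n ≫ log z`, which is where the condition on `d` is used.

Now let `Y = y ^ 2`. Call `n` typical if for no prime `q > Y` one of the following holds:
`q ^ 2 ∣ n`; `q ^ 2 ∣ p - 1` for a prime `p ∣ n`; `q` divides `p - 1` and `p' - 1` for two primes
`p ≠ p'` dividing `n`; `q ^ 2 ∣ r - 1` for a prime `r` dividing `p - 1` with `p ∣ n` prime. By the
bound above the number of `n ≤ x` that are not typical is
`≪ x * y ^ 2 * ∑_{q > Y} 1 / q ^ 2 ≪ x / log Y` (`card_not_typical_le`), which is `o(x)`.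

For typical `n` and a prime `q > Y`, the exponent of `q` in `φ (φ n)` is at most the number `k` of
chains `q ∣ r - 1`, `r ∣ p - 1`, `p ∣ n` with `p` and `r` prime
(`factorization_totient_totient_le`). If the exponent is at least `2`, then `k ≤ k * (k - 1)`, and
`k * (k - 1)` counts ordered pairs of distinct chains. Summed over `n ≤ x` this count is
`≪ x * y ^ 4 / q ^ 2` (`sum_card_offDiag_le`). As `∑_{q > Y} log q / q ^ 2 ≪ 1 / Y` by Chebyshev's
bound, the sum over typical `n ≤ x` of the quantity in the theorem is `≪ x * y ^ 2`. By Markov's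
inequality it exceeds `ψ x * y ^ 2` for `≪ x / ψ x` integers only (`card_large_le`).
-/

namespace PhiPhi
open Finset
open scoped ArithmeticFunction.Moebius

/-! ### An upper bound sieve for the primes `d * m + 1` -/

lemma card_progression (l d a N : ℕ) (hl : 0 < l) (hld : l.Coprime d) :
    |(#{m ∈ Ico a (a + N) | l ∣ d * m + 1} : ℝ) - N / l| ≤ 1 := by
  have : NeZero l := ⟨hl.ne'⟩
  obtain ⟨v, hv⟩ : ∃ v : ℕ, l ∣ d * v + 1 := by
    refine ⟨(-((ZMod.unitOfCoprime d hld.symm)⁻¹ : (ZMod l)ˣ) : ZMod l).val, ?_⟩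
    rw [← ZMod.natCast_eq_zero_iff]
    push_cast
    rw [ZMod.natCast_zmod_val, ← ZMod.coe_unitOfCoprime d hld.symm, mul_neg, Units.mul_inv]
    simp
  have heq : {m ∈ Ico a (a + N) | l ∣ d * m + 1} = {m ∈ Ico a (a + N) | m ≡ v [MOD l]} := by
    apply Finset.filter_congr
    intro m _
    have h0 : d * v + 1 ≡ 0 [MOD l] := (Nat.modEq_zero_iff_dvd).2 hv
    rw [← Nat.modEq_zero_iff_dvd]
    constructor
    · intro h
      have h1 : d * m + 1 ≡ d * v + 1 [MOD l] := h.trans h0.symm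
      exact Nat.ModEq.cancel_left_of_coprime hld (Nat.ModEq.add_right_cancel' 1 h1)
    · intro h
      exact ((h.mul_left d).add_right 1).trans h0
  rw [heq]
  have h := Nat.Ico_filter_modEq_card a (a + N) hl v
  have hle : (a - v : ℚ) / l ≤ ((a + N : ℕ) - v : ℚ) / l := by
    gcongr; omega
  rw [max_eq_left (sub_nonneg.2 (Int.ceil_mono hle))] at h
  have h1 := Int.le_ceil ((a - v : ℚ) / l)
  have h2 := Int.ceil_lt_add_one ((a - v : ℚ) / l)
  have h3 := Int.le_ceil (((a + N : ℕ) - v : ℚ) / l)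
  have h4 := Int.ceil_lt_add_one (((a + N : ℕ) - v : ℚ) / l)
  have h5 : (((a + N : ℕ) - v : ℚ) / l) = (a - v : ℚ) / l + N / l := by push_cast; ring
  have h6 : |(#{m ∈ Ico a (a + N) | m ≡ v [MOD l]} : ℚ) - N / l| ≤ 1 := by
    have h' : (#{m ∈ Ico a (a + N) | m ≡ v [MOD l]} : ℚ) =
      ⌈(((a + N : ℕ) - v : ℚ) / l)⌉ - ⌈(a - v : ℚ) / l⌉ := by exact_mod_cast h
    rw [h', abs_le]
    constructor <;> linarith
  have h7 : ((|(#{m ∈ Ico a (a + N) | m ≡ v [MOD l]} : ℚ) - N / l| : ℚ) : ℝ) ≤ (1 : ℚ) :=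
    Rat.cast_le.2 h6
  push_cast at h7
  exact h7

/-- The identity behind dual Möbius inversion: the matrices `[k ∣ e]` and `[e ∣ j] μ (j / e)` are
inverse to each other. -/
lemma sum_moebius_between (k j : ℕ) (hk : 0 < k) (hj : 0 < j) (hkj : k ∣ j) :
    ∑ e ∈ j.divisors with k ∣ e, (μ (j / e) : ℝ) = if k = j then 1 else 0 := by
  obtain ⟨t, rfl⟩ := hkj
  have ht : 0 < t := Nat.pos_of_mul_pos_left hj
  have h1 : ∑ e ∈ (k * t).divisors with k ∣ e, (μ (k * t / e) : ℝ)
      = ∑ e ∈ t.divisors, (μ (t / e) : ℝ) := by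
    symm
    refine Finset.sum_bij (fun e _ => k * e) ?_ ?_ ?_ ?_
    · intro e he
      rw [Nat.mem_divisors] at he
      simp only [mem_filter, Nat.mem_divisors]
      exact ⟨⟨Nat.mul_dvd_mul_left k he.1, hj.ne'⟩, dvd_mul_right _ _⟩
    · intro a _ b _ h
      exact Nat.eq_of_mul_eq_mul_left hk h
    · intro b hb
      simp only [mem_filter, Nat.mem_divisors] at hb
      obtain ⟨⟨h1, h2⟩, c, rfl⟩ := hb
      exact ⟨c, Nat.mem_divisors.2 ⟨Nat.dvd_of_mul_dvd_mul_left hk h1, ht.ne'⟩, rfl⟩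
    · intro e _
      rw [Nat.mul_div_mul_left _ _ hk]
  rw [h1, Nat.sum_div_divisors t (fun e => (μ e : ℝ))]
  have h2 : ∑ e ∈ t.divisors, μ e = if t = 1 then 1 else 0 := by
    have := congrArg (fun f => f t) ArithmeticFunction.coe_zeta_mul_moebius
    simp only [ArithmeticFunction.coe_zeta_mul_apply, ArithmeticFunction.one_apply] at this
    exact this
  have h3 : ∑ e ∈ t.divisors, (μ e : ℝ) = if t = 1 then 1 else 0 := by exact_mod_cast h2
  rw [h3]
  congr 1
  simp only [eq_iff_iff]
  constructor
  · rintro rfl; simp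
  · intro h
    have : k * t = k * 1 := by omega
    exact Nat.eq_of_mul_eq_mul_left hk this

/-- The sieving moduli: the integers `1 ≤ k ≤ z` coprime to `d`. -/
def sieveSupport (d z : ℕ) : Finset ℕ := {k ∈ Icc 1 z | k.Coprime d}

/-- The sum of `μ k ^ 2 / k` over the sieving moduli: the saving provided by the sieve. -/
noncomputable def sieveMass (d z : ℕ) : ℝ := ∑ k ∈ sieveSupport d z, (μ k : ℝ) ^ 2 / k

/-- The sieve weight attached to `e`. It is chosen by dual Möbius inversion so that
`sum_sieveWeight_div` holds. It is not normalised: its value at `1` is `sieveMass d z`. -/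
noncomputable def sieveWeight (d z e : ℕ) : ℝ :=
  e * ∑ k ∈ sieveSupport d z with e ∣ k, (μ (k / e) : ℝ) * (μ k / k)

lemma mem_sieveSupport {d z k : ℕ} :
    k ∈ sieveSupport d z ↔ (1 ≤ k ∧ k ≤ z) ∧ k.Coprime d := by
  simp [sieveSupport]

lemma sieveSupport_dvd {d z k e : ℕ} (hk : k ∈ sieveSupport d z) (h : e ∣ k) :
    e ∈ sieveSupport d z := by
  rw [mem_sieveSupport] at *
  exact ⟨⟨Nat.pos_of_dvd_of_pos h hk.1.1, (Nat.le_of_dvd hk.1.1 h).trans hk.1.2⟩,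
    hk.2.coprime_dvd_left h⟩

lemma abs_moebius_real_le (n : ℕ) : |(μ n : ℝ)| ≤ 1 := by
  exact_mod_cast ArithmeticFunction.abs_moebius_le_one (n := n)

lemma abs_moebius_real_eq (n : ℕ) : |(μ n : ℝ)| = (μ n : ℝ) ^ 2 := by
  rcases ArithmeticFunction.moebius_eq_or n with h | h | h <;> simp [h]

lemma sieveMass_nonneg (d z : ℕ) : 0 ≤ sieveMass d z :=
  Finset.sum_nonneg fun _ _ => by positivity

lemma sieveWeight_one (d z : ℕ) : sieveWeight d z 1 = sieveMass d z := by
  simp [sieveWeight, sieveMass]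
  refine Finset.sum_congr rfl fun k _ => by ring

lemma abs_sieveWeight_le (d z e : ℕ) : |sieveWeight d z e| ≤ e * sieveMass d z := by
  unfold sieveWeight sieveMass
  rw [abs_mul, Nat.abs_cast]
  gcongr
  refine (Finset.abs_sum_le_sum_abs _ _).trans ?_
  refine (Finset.sum_le_sum_of_subset_of_nonneg (Finset.filter_subset _ _)
    fun _ _ _ => abs_nonneg _).trans ?_
  refine Finset.sum_le_sum fun k _ => ?_
  rw [abs_mul, abs_div, Nat.abs_cast, ← abs_moebius_real_eq]
  calc _ ≤ 1 * (|(μ k : ℝ)| / k) := by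
        gcongr; exact abs_moebius_real_le _
    _ = _ := one_mul _

/-- The weights diagonalise the quadratic form of the sieve with values `μ k / k`. -/
lemma sum_sieveWeight_div (d z k : ℕ) (hk : k ∈ sieveSupport d z) :
    ∑ e ∈ sieveSupport d z with k ∣ e, sieveWeight d z e / e = μ k / k := by
  have h1 : ∀ e ∈ (sieveSupport d z).filter (k ∣ ·), sieveWeight d z e / e =
      ∑ j ∈ sieveSupport d z, if e ∣ j then (μ (j / e) : ℝ) * (μ j / j) else 0 := by
    intro e he
    have : (e : ℝ) ≠ 0 := by
      have := (mem_sieveSupport.1 (mem_filter.1 he).1).1.1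
      positivity
    rw [sieveWeight, mul_div_cancel_left₀ _ this, Finset.sum_filter]
  rw [Finset.sum_congr rfl h1, Finset.sum_comm]
  have h2 : ∀ j ∈ sieveSupport d z,
      (∑ e ∈ sieveSupport d z with k ∣ e, if e ∣ j then (μ (j / e) : ℝ) * (μ j / j) else 0)
      = if k = j then (μ j / j : ℝ) else 0 := by
    intro j hj
    have hj0 := (mem_sieveSupport.1 hj).1.1
    rw [← Finset.sum_filter, ← Finset.sum_mul]
    have h3 : ((sieveSupport d z).filter (k ∣ ·)).filter (· ∣ j) =
        j.divisors.filter (k ∣ ·) := by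
      ext e
      simp only [mem_filter, Nat.mem_divisors]
      constructor
      · rintro ⟨⟨_, h⟩, h'⟩; exact ⟨⟨h', by omega⟩, h⟩
      · rintro ⟨⟨h', _⟩, h⟩; exact ⟨⟨sieveSupport_dvd hj h', h⟩, h'⟩
    rw [h3]
    by_cases hkj : k ∣ j
    · rw [sum_moebius_between k j (mem_sieveSupport.1 hk).1.1 hj0 hkj]
      split_ifs <;> simp
    · rw [Finset.filter_eq_empty_iff.2, if_neg]
      · simp
      · rintro rfl; exact hkj dvd_rfl
      · intro e he hke
        exact hkj (hke.trans (Nat.dvd_of_mem_divisors he))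
  rw [Finset.sum_congr rfl h2]
  simp [hk]

/-- The main term of the sieve. Writing `1 / lcm e f = gcd e f / (e * f)` and
`gcd e f = ∑_{k ∣ gcd e f} φ k` turns the quadratic form into `∑ φ k * (μ k / k) ^ 2`. -/
lemma sieve_quadratic_form (d z : ℕ) :
    ∑ e ∈ sieveSupport d z, ∑ f ∈ sieveSupport d z,
      sieveWeight d z e * sieveWeight d z f / (e.lcm f : ℕ) ≤ sieveMass d z := by
  have h1 : ∀ e ∈ sieveSupport d z, ∀ f ∈ sieveSupport d z,
      sieveWeight d z e * sieveWeight d z f / (e.lcm f : ℕ) =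
      ∑ k ∈ sieveSupport d z, (k.totient : ℝ) *
        ((if k ∣ e then sieveWeight d z e / e else 0) *
          (if k ∣ f then sieveWeight d z f / f else 0)) := by
    intro e he f hf
    have he0 := (mem_sieveSupport.1 he).1.1
    have hf0 := (mem_sieveSupport.1 hf).1.1
    have hg : ((e.gcd f : ℕ) : ℝ) = ∑ k ∈ sieveSupport d z with k ∣ e ∧ k ∣ f, (k.totient : ℝ) := by
      conv_lhs => rw [← Nat.sum_totient (e.gcd f)]
      push_cast
      refine Finset.sum_congr ?_ fun _ _ => rfl
      ext k
      simp only [mem_filter, Nat.mem_divisors, Nat.dvd_gcd_iff]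
      constructor
      · rintro ⟨h, _⟩; exact ⟨sieveSupport_dvd he h.1, h⟩
      · rintro ⟨_, h⟩; exact ⟨h, (Nat.gcd_pos_of_pos_left _ he0).ne'⟩
    have hl : ((e.gcd f : ℕ) : ℝ) * (e.lcm f : ℕ) = e * f := by exact_mod_cast Nat.gcd_mul_lcm e f
    have hl0 : 0 < e.lcm f := Nat.lcm_pos he0 hf0
    have e0 : (e : ℝ) ≠ 0 := by positivity
    have f0 : (f : ℝ) ≠ 0 := by positivity
    have l0 : ((e.lcm f : ℕ) : ℝ) ≠ 0 := by positivity
    have : sieveWeight d z e * sieveWeight d z f / (e.lcm f : ℕ) =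
        (e.gcd f : ℕ) * (sieveWeight d z e / e * (sieveWeight d z f / f)) := by
      field_simp
      linear_combination (-(sieveWeight d z e * sieveWeight d z f)) * hl
    rw [this, hg, Finset.sum_mul, Finset.sum_filter]
    refine Finset.sum_congr rfl fun k _ => ?_
    by_cases h1 : k ∣ e <;> by_cases h2 : k ∣ f <;> simp [h1, h2]
  rw [Finset.sum_congr rfl fun e he => Finset.sum_congr rfl fun f hf => h1 e he f hf]
  have h2 : ∑ e ∈ sieveSupport d z, ∑ f ∈ sieveSupport d z,
      ∑ k ∈ sieveSupport d z, (k.totient : ℝ) *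
        ((if k ∣ e then sieveWeight d z e / e else 0) *
          (if k ∣ f then sieveWeight d z f / f else 0)) =
      ∑ k ∈ sieveSupport d z, (k.totient : ℝ) *
        (∑ e ∈ sieveSupport d z with k ∣ e, sieveWeight d z e / e) ^ 2 := by
    rw [Finset.sum_congr rfl fun e _ => Finset.sum_comm, Finset.sum_comm]
    refine Finset.sum_congr rfl fun k _ => ?_
    rw [sq, Finset.sum_filter, Finset.sum_mul_sum]
    simp only [Finset.mul_sum]
  rw [h2]
  unfold sieveMass
  refine Finset.sum_le_sum fun k hk => ?_
  rw [sum_sieveWeight_div d z k hk]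
  have hk0 : 0 < k := (mem_sieveSupport.1 hk).1.1
  have hk0 : (0 : ℝ) < k := by positivity
  have : (k.totient : ℝ) ≤ k := by exact_mod_cast Nat.totient_le k
  calc (k.totient : ℝ) * ((μ k : ℝ) / k) ^ 2 ≤ k * ((μ k : ℝ) / k) ^ 2 := by gcongr
    _ = _ := by field_simp

/-- The sieve bound. If `d * m + 1` is prime and exceeds `z`, only the weight at `1` contributes to
`∑_{e ∣ d * m + 1} w e`, whose square is therefore `sieveMass d z ^ 2`. -/
lemma sieve_card_le (d z N : ℕ) (hd : 0 < d) (hz : 1 ≤ z) (hN : z ≤ N) :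
    (#{m ∈ Ico N (N + N) | (d * m + 1).Prime} : ℝ) ≤ N / sieveMass d z + z ^ 4 := by
  set G := sieveMass d z with hG
  have hGpos : 0 < G := by
    have h1 : 1 ∈ sieveSupport d z := mem_sieveSupport.2 ⟨⟨le_rfl, hz⟩, Nat.coprime_one_left d⟩
    have := Finset.single_le_sum (f := fun k : ℕ => (μ k : ℝ) ^ 2 / k)
      (fun _ _ => by positivity) h1
    simp only [ArithmeticFunction.moebius_apply_one] at this
    norm_num at this
    unfold sieveMass at hG
    linarith
  set K := sieveSupport d z with hK
  set w := sieveWeight d z with hw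
  have hT : ∀ m ∈ (Ico N (N + N)).filter (fun m => (d * m + 1).Prime),
      G ^ 2 ≤ (∑ e ∈ K, if e ∣ d * m + 1 then w e else 0) ^ 2 := by
    intro m hm
    simp only [mem_filter, mem_Ico] at hm
    have : ∑ e ∈ K, (if e ∣ d * m + 1 then w e else 0) = w 1 := by
      rw [Finset.sum_eq_single_of_mem 1
        (mem_sieveSupport.2 ⟨⟨le_rfl, hz⟩, Nat.coprime_one_left d⟩)]
      · simp
      · intro e he he1
        rw [if_neg]
        intro hdvd
        rcases (Nat.dvd_prime hm.2).1 hdvd with h | h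
        · exact he1 h
        · have := (mem_sieveSupport.1 he).1.2
          -- `e ≤ z ≤ N ≤ m < d * m + 1`
          nlinarith
    rw [this, hw, sieveWeight_one]
  have h1 : (#{m ∈ Ico N (N + N) | (d * m + 1).Prime} : ℝ) * G ^ 2 ≤
      ∑ m ∈ Ico N (N + N), (∑ e ∈ K, if e ∣ d * m + 1 then w e else 0) ^ 2 := by
    rw [← nsmul_eq_mul]
    refine (Finset.card_nsmul_le_sum _ _ _ hT).trans ?_
    exact Finset.sum_le_sum_of_subset_of_nonneg (Finset.filter_subset _ _)
      fun _ _ _ => sq_nonneg _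
  have h2 : ∑ m ∈ Ico N (N + N), (∑ e ∈ K, if e ∣ d * m + 1 then w e else 0) ^ 2 =
      ∑ e ∈ K, ∑ f ∈ K, w e * w f * #{m ∈ Ico N (N + N) | e.lcm f ∣ d * m + 1} := by
    simp_rw [sq, Finset.sum_mul_sum]
    rw [Finset.sum_comm]
    refine Finset.sum_congr rfl fun e _ => ?_
    rw [Finset.sum_comm]
    refine Finset.sum_congr rfl fun f _ => ?_
    rw [Finset.card_filter]
    push_cast
    rw [Finset.mul_sum]
    refine Finset.sum_congr rfl fun m _ => ?_
    by_cases h1 : e ∣ d * m + 1 <;> by_cases h2 : f ∣ d * m + 1 <;> simp [Nat.lcm_dvd_iff, h1, h2]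
  have h3 : ∀ e ∈ K, ∀ f ∈ K,
      w e * w f * #{m ∈ Ico N (N + N) | e.lcm f ∣ d * m + 1} ≤
        N * (w e * w f / (e.lcm f : ℕ)) + (z * G) * (z * G) := by
    intro e he f hf
    have he' := mem_sieveSupport.1 he
    have hf' := mem_sieveSupport.1 hf
    have hc : (e.lcm f).Coprime d := by
      have := Nat.Coprime.mul_left he'.2 hf'.2
      exact this.coprime_dvd_left (Nat.lcm_dvd_mul e f)
    have h := card_progression (e.lcm f) d N N (Nat.lcm_pos he'.1.1 hf'.1.1) hc
    have hb : ∀ e ∈ K, |w e| ≤ z * G := by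
      intro e he
      refine (abs_sieveWeight_le d z e).trans ?_
      have : (e : ℝ) ≤ z := by exact_mod_cast (mem_sieveSupport.1 he).1.2
      gcongr
    have h4 : w e * w f * ((#{m ∈ Ico N (N + N) | e.lcm f ∣ d * m + 1} : ℝ) - N / (e.lcm f : ℕ))
        ≤ (z * G) * (z * G) := by
      refine (le_abs_self _).trans ?_
      rw [abs_mul, abs_mul]
      calc _ ≤ (z * G) * (z * G) * 1 := by
            gcongr
            · exact hb e he
            · exact hb f hf
        _ = _ := mul_one _
    calc _ = w e * w f * ((#{m ∈ Ico N (N + N) | e.lcm f ∣ d * m + 1} : ℝ) - N / (e.lcm f : ℕ))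
          + N * (w e * w f / (e.lcm f : ℕ)) := by ring
      _ ≤ _ := by linarith
  have hKcard : (#K : ℝ) ≤ z := by
    have : #K ≤ #(Icc 1 z) := Finset.card_filter_le _ _
    simp at this
    exact_mod_cast this
  have h5 : (#{m ∈ Ico N (N + N) | (d * m + 1).Prime} : ℝ) * G ^ 2 ≤ N * G + z ^ 4 * G ^ 2 := by
    refine h1.trans (h2.le.trans ?_)
    refine (Finset.sum_le_sum fun e he => Finset.sum_le_sum fun f hf => h3 e he f hf).trans ?_
    have hc : 0 ≤ (z * G) * (z * G) := by positivity
    have hc' : (z * G) * (z * G) = z ^ 2 * G ^ 2 := by ring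
    generalize (z * G) * (z * G) = c at *
    simp only [Finset.sum_add_distrib, ← Finset.mul_sum, Finset.sum_const, nsmul_eq_mul]
    have := sieve_quadratic_form d z
    calc _ ≤ N * G + (z : ℝ) * (z * c) := by gcongr
      _ = _ := by rw [hc']; ring
  have h6 : (N / G + z ^ 4) * G ^ 2 = N * G + z ^ 4 * G ^ 2 := by field_simp
  rw [← h6] at h5
  exact le_of_mul_le_mul_right h5 (by positivity)

/-! ### Reciprocals of primes congruent to `1` modulo `d` -/

lemma harmonic_real (n : ℕ) : ((harmonic n : ℚ) : ℝ) = ∑ m ∈ Icc 1 n, (1 : ℝ) / m := by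
  rw [harmonic_eq_sum_Icc]
  push_cast
  simp

/-- Write `n = b ^ 2 * a` with `a` squarefree, and use `∑ 1 / b ^ 2 ≤ 2`. -/
lemma sum_inv_sieveSupport_le (d z : ℕ) :
    ∑ n ∈ sieveSupport d z, (1 : ℝ) / n ≤ 2 * sieveMass d z := by
  choose a b hab ha using Nat.sq_mul_squarefree
  have hinj : Set.InjOn (fun n => (a n, b n)) (sieveSupport d z : Set ℕ) := by
    intro n _ m _ h
    simp only [Prod.mk.injEq] at h
    rw [← hab n, ← hab m, h.1, h.2]
  have h1 : ∑ n ∈ sieveSupport d z, (1 : ℝ) / n =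
      ∑ t ∈ (sieveSupport d z).image (fun n => (a n, b n)),
        (μ t.1 : ℝ) ^ 2 / t.1 * (1 / (t.2 : ℝ) ^ 2) := by
    rw [Finset.sum_image hinj]
    refine Finset.sum_congr rfl fun n _ => ?_
    have h2 : (μ (a n) : ℝ) ^ 2 = 1 := by
      exact_mod_cast ArithmeticFunction.moebius_sq_eq_one_of_squarefree (ha n)
    have h3 : (n : ℝ) = (b n : ℝ) ^ 2 * a n := by exact_mod_cast (hab n).symm
    rw [h2, h3]
    simp only [one_div, mul_inv]
    ring
  have h2 : (sieveSupport d z).image (fun n => (a n, b n)) ⊆ sieveSupport d z ×ˢ Ioc 0 z := by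
    intro t ht
    obtain ⟨n, hn, rfl⟩ := mem_image.1 ht
    have hn' := mem_sieveSupport.1 hn
    rw [mem_product]
    refine ⟨sieveSupport_dvd hn ⟨b n ^ 2, by rw [mul_comm]; exact (hab n).symm⟩, ?_⟩
    have hb : b n ∣ n := (dvd_pow_self _ two_ne_zero).trans ⟨a n, (hab n).symm⟩
    exact mem_Ioc.2 ⟨Nat.pos_of_dvd_of_pos hb hn'.1.1, (Nat.le_of_dvd hn'.1.1 hb).trans hn'.1.2⟩
  rw [h1]
  refine (Finset.sum_le_sum_of_subset_of_nonneg h2 fun _ _ _ => by positivity).trans ?_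
  rw [Finset.sum_product]
  dsimp only
  rw [← Finset.sum_mul_sum]
  have h3 : ∑ i ∈ Ioc 0 z, 1 / (i : ℝ) ^ 2 ≤ 2 := by
    have := sum_Ioo_inv_sq_le (α := ℝ) 0 (z + 1)
    have h4 : Ioo 0 (z + 1) = Ioc 0 z := by ext; simp
    rw [h4] at this
    simpa using this
  have := sieveMass_nonneg d z
  rw [mul_comm 2]
  exact mul_le_mul_of_nonneg_left h3 this

lemma sum_inv_multiples_le (p z : ℕ) (hp : 0 < p) :
    ∑ n ∈ Icc 1 z with p ∣ n, (1 : ℝ) / n ≤ 1 / p * ∑ n ∈ Icc 1 z, (1 : ℝ) / n := by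
  have h : (Icc 1 z).filter (p ∣ ·) ⊆ (Icc 1 z).image (p * ·) := by
    intro n hn
    simp only [mem_filter, mem_Icc] at hn
    obtain ⟨⟨h1, h2⟩, m, rfl⟩ := hn
    have hm : 0 < m := Nat.pos_of_mul_pos_left h1
    exact mem_image.2 ⟨m, mem_Icc.2 ⟨hm, by nlinarith⟩, rfl⟩
  refine (Finset.sum_le_sum_of_subset_of_nonneg h fun _ _ _ => by positivity).trans ?_
  rw [Finset.sum_image fun a _ b _ h => Nat.eq_of_mul_eq_mul_left hp h, Finset.mul_sum]
  refine Finset.sum_le_sum fun m _ => ?_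
  push_cast
  rw [one_div_mul_one_div]

/-- The terms of the harmonic sum that are not coprime to `d` make up at most half of it, by the
condition on `d`. -/
lemma harmonic_le_sieveMass (d z : ℕ) (hd : 0 < d)
    (hgood : ∑ p ∈ d.primeFactors, (1 : ℝ) / p ≤ 1 / 2) :
    ∑ n ∈ Icc 1 z, (1 : ℝ) / n ≤ 4 * sieveMass d z := by
  set H := ∑ n ∈ Icc 1 z, (1 : ℝ) / n with hH
  have hH0 : 0 ≤ H := Finset.sum_nonneg fun _ _ => by positivity
  have h1 : H ≤ ∑ n ∈ sieveSupport d z, (1 : ℝ) / n +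
      ∑ p ∈ d.primeFactors, ∑ n ∈ Icc 1 z with p ∣ n, (1 : ℝ) / n := by
    simp only [sieveSupport, Finset.sum_filter]
    rw [Finset.sum_comm, ← Finset.sum_add_distrib]
    refine Finset.sum_le_sum fun n hn => ?_
    have hnn : ∀ p ∈ d.primeFactors, 0 ≤ (if p ∣ n then (1 : ℝ) / n else 0) := by
      intro p _; split_ifs <;> positivity
    by_cases h : n.Coprime d
    · rw [if_pos h]
      have := Finset.sum_nonneg hnn
      linarith
    · obtain ⟨p, hp, hpn, hpd⟩ := Nat.Prime.not_coprime_iff_dvd.1 h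
      have := Finset.single_le_sum hnn (Nat.mem_primeFactors.2 ⟨hp, hpd, hd.ne'⟩)
      rw [if_pos hpn] at this
      rw [if_neg h]
      linarith
  have h2 : ∑ p ∈ d.primeFactors, ∑ n ∈ Icc 1 z with p ∣ n, (1 : ℝ) / n ≤ 1 / 2 * H := by
    refine (Finset.sum_le_sum fun p hp =>
      sum_inv_multiples_le p z (Nat.prime_of_mem_primeFactors hp).pos).trans ?_
    rw [← Finset.sum_mul]
    gcongr
  have h3 := sum_inv_sieveSupport_le d z
  linarith

/-- The sieve bound with `N = 2 ^ j` and `z = 2 ^ (j / 8)`, so that the error `z ^ 4` is negligible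
and `sieveMass d z ≫ log z ≫ j + 1`. -/
lemma dyadic_card_le (d j : ℕ) (hd : 0 < d)
    (hgood : ∑ p ∈ d.primeFactors, (1 : ℝ) / p ≤ 1 / 2) :
    (#{m ∈ Ico (2 ^ j) (2 ^ j + 2 ^ j) | (d * m + 1).Prime} : ℝ) ≤ 130 * 2 ^ j / (j + 1) := by
  set i := j / 8 with hi
  have hi1 : 8 * i ≤ j := by omega
  have hi2 : j + 1 ≤ 8 * (i + 1) := by omega
  have h := sieve_card_le d (2 ^ i) (2 ^ j) hd Nat.one_le_two_pow
    (Nat.pow_le_pow_right (by norm_num) (by omega))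
  have hH := harmonic_le_sieveMass d (2 ^ i) hd hgood
  rw [← harmonic_real] at hH
  have hlog := log_add_one_le_harmonic (2 ^ i)
  have hl2 : (0.69 : ℝ) < Real.log 2 := by have := Real.log_two_gt_d9; linarith
  have h1 : (i : ℝ) * Real.log 2 ≤ Real.log ((2 ^ i : ℕ) + 1) := by
    rw [← Real.log_pow]
    apply Real.log_le_log (by positivity)
    push_cast; linarith
  have h2 : Real.log 2 ≤ Real.log ((2 ^ i : ℕ) + 1) := by
    apply Real.log_le_log (by positivity)
    have : (1 : ℝ) ≤ 2 ^ i := one_le_pow₀ (by norm_num)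
    push_cast; linarith
  have hi0 : (0 : ℝ) ≤ i := by positivity
  have hij : (j + 1 : ℝ) ≤ 8 * (i + 1) := by exact_mod_cast hi2
  push_cast at hlog h1 h2
  have hG : (j + 1 : ℝ) / 128 ≤ sieveMass d (2 ^ i) := by nlinarith
  have hpow : (((2 ^ i : ℕ) : ℝ)) ^ 4 * (j + 1) ≤ 2 * 2 ^ j := by
    have h3 : (2 ^ i) ^ 4 * (j + 1) ≤ 2 * 2 ^ j := by
      obtain ⟨t, ht⟩ : ∃ t, j = 4 * i + t := ⟨j - 4 * i, by omega⟩
      have h4 : t < 2 ^ t := Nat.lt_two_pow_self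
      have h5 : j + 1 ≤ 2 * 2 ^ t := by omega
      calc (2 ^ i) ^ 4 * (j + 1) ≤ (2 ^ i) ^ 4 * (2 * 2 ^ t) := Nat.mul_le_mul_left _ h5
        _ = 2 * 2 ^ j := by rw [ht, pow_add, pow_mul']; ring
    exact_mod_cast h3
  have hj : (0 : ℝ) < j + 1 := by positivity
  refine h.trans ?_
  have h6 : ((2 ^ j : ℕ) : ℝ) / sieveMass d (2 ^ i) ≤ 128 * 2 ^ j / (j + 1) := by
    calc _ ≤ ((2 ^ j : ℕ) : ℝ) / ((j + 1 : ℝ) / 128) := by gcongr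
      _ = _ := by push_cast; field_simp
  have h7 : (((2 ^ i : ℕ) : ℝ)) ^ 4 ≤ 2 * 2 ^ j / (j + 1) := by
    rw [le_div_iff₀ hj]; exact hpow
  calc _ ≤ 128 * 2 ^ j / (j + 1 : ℝ) + 2 * 2 ^ j / (j + 1) := add_le_add h6 h7
    _ = _ := by ring

/-- The primes up to `X`. -/
def primesTo (X : ℕ) : Finset ℕ := {p ∈ range (X + 1) | p.Prime}

/-- The sum of `1 / p` over the primes `p ≤ X` with `p ≡ 1` modulo `d`. The subtraction `p - 1` in
`ℕ` is harmless as `p ≥ 2`. -/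
noncomputable def recipSum (X d : ℕ) : ℝ := ∑ p ∈ primesTo X with d ∣ p - 1, (1 : ℝ) / p

lemma mem_primesTo {X p : ℕ} : p ∈ primesTo X ↔ p ≤ X ∧ p.Prime := by
  simp [primesTo]

lemma recipSum_nonneg (X d : ℕ) : 0 ≤ recipSum X d :=
  Finset.sum_nonneg fun _ _ => by positivity

/-- Dyadic summation of `dyadic_card_le` over `m = (p - 1) / d`. -/
lemma recipSum_le (X d : ℕ) (hd : 0 < d)
    (hgood : ∑ p ∈ d.primeFactors, (1 : ℝ) / p ≤ 1 / 2) :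
    recipSum X d ≤ 130 * (1 + Real.log (Nat.log 2 X + 1 : ℕ)) / d := by
  have hd' : (0 : ℝ) < d := by positivity
  have h1 : recipSum X d ≤ ∑ m ∈ Icc 1 X with (d * m + 1).Prime, (1 : ℝ) / (d * m) := by
    unfold recipSum
    have hsub : (primesTo X).filter (fun p => d ∣ p - 1) ⊆
        ((Icc 1 X).filter (fun m => (d * m + 1).Prime)).image (fun m => d * m + 1) := by
      intro p hp
      simp only [mem_filter, mem_primesTo] at hp
      obtain ⟨⟨hpX, hpp⟩, m, hm⟩ := hp
      have h2 := hpp.two_le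
      have hpm : p = d * m + 1 := by omega
      subst hpm
      have hm0 : 0 < m := by
        rcases Nat.eq_zero_or_pos m with rfl | h
        · simp at h2
        · exact h
      refine mem_image.2 ⟨m, ?_, rfl⟩
      simp only [mem_filter, mem_Icc]
      exact ⟨⟨hm0, by nlinarith⟩, hpp⟩
    refine (Finset.sum_le_sum_of_subset_of_nonneg hsub fun _ _ _ => by positivity).trans ?_
    rw [Finset.sum_image]
    · refine Finset.sum_le_sum fun m hm => ?_
      have hm0 : 0 < m := (mem_Icc.1 (mem_filter.1 hm).1).1
      push_cast
      gcongr
      linarith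
    · intro a _ b _ h
      exact Nat.eq_of_mul_eq_mul_left hd (Nat.add_right_cancel h)
  refine h1.trans ?_
  rw [← Finset.sum_fiberwise_of_maps_to (t := range (Nat.log 2 X + 1)) (g := fun m => Nat.log 2 m)]
  swap
  · intro m hm
    have hm' := mem_Icc.1 (mem_filter.1 hm).1
    exact mem_range.2 (Nat.lt_succ_of_le (Nat.log_mono_right hm'.2))
  have h2 : ∀ j ∈ range (Nat.log 2 X + 1),
      ∑ m ∈ ((Icc 1 X).filter (fun m => (d * m + 1).Prime)).filter (fun m => Nat.log 2 m = j),
        (1 : ℝ) / (d * m) ≤ 130 / d * (1 / ((j + 1 : ℕ) : ℝ)) := by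
    intro j _
    have hsub : ((Icc 1 X).filter (fun m => (d * m + 1).Prime)).filter (fun m => Nat.log 2 m = j) ⊆
        (Ico (2 ^ j) (2 ^ j + 2 ^ j)).filter (fun m => (d * m + 1).Prime) := by
      intro m hm
      simp only [mem_filter, mem_Icc] at hm
      obtain ⟨⟨⟨hm0, _⟩, hp⟩, rfl⟩ := hm
      simp only [mem_filter, mem_Ico]
      refine ⟨⟨Nat.pow_log_le_self 2 (by omega), ?_⟩, hp⟩
      have := Nat.lt_pow_succ_log_self (b := 2) (by norm_num) m
      rw [pow_succ] at this
      omega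
    refine (Finset.sum_le_sum_of_subset_of_nonneg hsub fun _ _ _ => by positivity).trans ?_
    have h3 : ∀ m ∈ (Ico (2 ^ j) (2 ^ j + 2 ^ j)).filter (fun m => (d * m + 1).Prime),
        (1 : ℝ) / (d * m) ≤ 1 / (d * 2 ^ j) := by
      intro m hm
      have : (2 ^ j : ℝ) ≤ m := by exact_mod_cast (mem_Ico.1 (mem_filter.1 hm).1).1
      gcongr
    refine (Finset.sum_le_card_nsmul _ _ _ h3).trans ?_
    rw [nsmul_eq_mul]
    have h4 := dyadic_card_le d j hd hgood
    calc _ ≤ 130 * 2 ^ j / (j + 1 : ℝ) * (1 / (d * 2 ^ j)) := by gcongr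
      _ = _ := by push_cast; field_simp
  refine (Finset.sum_le_sum h2).trans ?_
  rw [← Finset.mul_sum]
  have h5 : ∑ j ∈ range (Nat.log 2 X + 1), (1 / ((j + 1 : ℕ) : ℝ)) =
      ((harmonic (Nat.log 2 X + 1) : ℚ) : ℝ) := by
    rw [harmonic]; push_cast; simp
  rw [h5]
  calc _ ≤ 130 / (d : ℝ) * (1 + Real.log (Nat.log 2 X + 1 : ℕ)) := by
        gcongr; exact harmonic_le_one_add_log _
    _ = _ := by ring

/-! ### Tails of sums over primes -/

/-- Chebyshev's bound applied on the intervals `(2 ^ i * Y, 2 ^ (i + 1) * Y]` for `i < k`. -/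
lemma sum_log_div_sq_dyadic (Y : ℝ) (hY : 0 < Y) (M k : ℕ) :
    ∑ q ∈ primesTo M with Y < (q : ℕ) ∧ (q : ℝ) ≤ 2 ^ k * Y, Real.log q / (q : ℝ) ^ 2 ≤
      4 * Real.log 4 / Y * (1 - 1 / 2 ^ k) := by
  induction k with
  | zero =>
    rw [Finset.sum_eq_zero]
    · simp
    · intro q hq
      have := (mem_filter.1 hq).2
      linarith
  | succ k ih =>
    have hl4 : 0 < Real.log 4 := Real.log_pos (by norm_num)
    have hsub : (primesTo M).filter (fun q : ℕ => Y < (q : ℕ) ∧ (q : ℝ) ≤ 2 ^ (k + 1) * Y) ⊆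
        (primesTo M).filter (fun q : ℕ => Y < (q : ℕ) ∧ (q : ℝ) ≤ 2 ^ k * Y) ∪
        (primesTo M).filter (fun q : ℕ => 2 ^ k * Y < (q : ℕ) ∧ (q : ℝ) ≤ 2 ^ (k + 1) * Y) := by
      intro q hq
      simp only [mem_union, mem_filter] at *
      rcases le_or_gt (q : ℝ) (2 ^ k * Y) with h | h
      · exact Or.inl ⟨hq.1, hq.2.1, h⟩
      · exact Or.inr ⟨hq.1, h, hq.2.2⟩
    have hnn : ∀ q : ℕ, 0 ≤ Real.log q / (q : ℝ) ^ 2 := fun q =>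
      div_nonneg (Real.log_natCast_nonneg q) (by positivity)
    have hstep : ∑ q ∈ primesTo M with 2 ^ k * Y < (q : ℕ) ∧ (q : ℝ) ≤ 2 ^ (k + 1) * Y,
        Real.log q / (q : ℝ) ^ 2 ≤ 4 * Real.log 4 / Y * (1 / 2 ^ (k + 1)) := by
      have h1 : ∑ q ∈ primesTo M with 2 ^ k * Y < (q : ℕ) ∧ (q : ℝ) ≤ 2 ^ (k + 1) * Y,
          Real.log q / (q : ℝ) ^ 2 ≤
          ∑ q ∈ primesTo M with 2 ^ k * Y < (q : ℕ) ∧ (q : ℝ) ≤ 2 ^ (k + 1) * Y,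
          Real.log q / (2 ^ k * Y) ^ 2 := by
        refine Finset.sum_le_sum fun q hq => ?_
        have := (mem_filter.1 hq).2.1
        have := Real.log_natCast_nonneg q
        gcongr
      refine h1.trans ?_
      rw [← Finset.sum_div]
      have h2 : ∑ q ∈ primesTo M with 2 ^ k * Y < (q : ℕ) ∧ (q : ℝ) ≤ 2 ^ (k + 1) * Y,
          Real.log q ≤ Chebyshev.theta (2 ^ (k + 1) * Y) := by
        rw [Chebyshev.theta_eq_sum_Icc]
        refine Finset.sum_le_sum_of_subset_of_nonneg ?_ fun q _ _ => Real.log_natCast_nonneg q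
        intro q hq
        simp only [mem_filter, mem_primesTo, mem_Icc] at *
        exact ⟨⟨by omega, Nat.le_floor hq.2.2⟩, hq.1.2⟩
      have h3 := Chebyshev.theta_le_log4_mul_x (x := 2 ^ (k + 1) * Y) (by positivity)
      calc _ ≤ Real.log 4 * (2 ^ (k + 1) * Y) / (2 ^ k * Y) ^ 2 := by
            gcongr; exact h2.trans h3
        _ = _ := by rw [pow_succ]; field_simp; norm_num
    refine (Finset.sum_le_sum_of_subset_of_nonneg hsub fun q _ _ => hnn q).trans ?_
    refine (le_add_of_nonneg_right (Finset.sum_nonneg fun q _ => hnn q)).trans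
      (Finset.sum_union_inter.le.trans ?_)
    refine (add_le_add ih hstep).trans_eq ?_
    rw [pow_succ]; field_simp; ring

lemma sum_log_div_sq_le (Y : ℝ) (hY : 0 < Y) (M : ℕ) :
    ∑ q ∈ primesTo M with Y < ((q : ℕ) : ℝ), Real.log q / (q : ℝ) ^ 2 ≤ 4 * Real.log 4 / Y := by
  obtain ⟨k, hk⟩ := pow_unbounded_of_one_lt (M / Y) (by norm_num : (1 : ℝ) < 2)
  have hl4 : 0 < Real.log 4 := Real.log_pos (by norm_num)
  rw [div_lt_iff₀ hY] at hk
  have h := sum_log_div_sq_dyadic Y hY M k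
  have heq : (primesTo M).filter (fun q : ℕ => Y < ((q : ℕ) : ℝ)) =
      (primesTo M).filter (fun q : ℕ => Y < (q : ℕ) ∧ (q : ℝ) ≤ 2 ^ k * Y) := by
    refine Finset.filter_congr fun q hq => ?_
    have : (q : ℝ) ≤ M := by exact_mod_cast (mem_primesTo.1 hq).1
    constructor
    · intro h; exact ⟨h, by linarith⟩
    · exact fun h => h.1
  rw [heq]
  refine h.trans ?_
  have : (0 : ℝ) < 1 / 2 ^ k := by positivity
  have h2 : 0 < 4 * Real.log 4 / Y := by positivity
  nlinarith

lemma sum_inv_sq_le (Y : ℝ) (hY : 1 < Y) (M : ℕ) :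
    ∑ q ∈ primesTo M with Y < ((q : ℕ) : ℝ), 1 / (q : ℝ) ^ 2 ≤
      4 * Real.log 4 / (Y * Real.log Y) := by
  have hlY := Real.log_pos hY
  have h := sum_log_div_sq_le Y (by linarith) M
  have h1 : Real.log Y * ∑ q ∈ primesTo M with Y < ((q : ℕ) : ℝ), 1 / (q : ℝ) ^ 2 ≤
      4 * Real.log 4 / Y := by
    refine le_trans ?_ h
    rw [Finset.mul_sum]
    refine Finset.sum_le_sum fun q hq => ?_
    rw [mul_one_div]
    have := (mem_filter.1 hq).2
    gcongr
  rw [← div_div, le_div_iff₀ hlY, mul_comm]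
  exact h1

/-! ### Exponents of large primes in `φ (φ n)` -/

/-- If `q ^ 2` divides neither `m` nor any `p - 1` with `p ∣ m` prime, each prime factor `p` of `m`
contributes at most `1` to the exponent of `q` in `φ m`. -/
lemma factorization_totient_le (q m : ℕ) (hq : q.Prime) (hm : m ≠ 0) (h1 : ¬ q ^ 2 ∣ m)
    (h2 : ∀ p, p.Prime → p ∣ m → ¬ q ^ 2 ∣ p - 1) :
    m.totient.factorization q ≤ #{p ∈ m.primeFactors | q ∣ p - 1} := by
  rw [Nat.totient_eq_prod_factorization hm, Finsupp.prod, Nat.factorization_prod, Finset.card_filter,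
    Finsupp.finsetSum_apply, Nat.support_factorization]
  · refine Finset.sum_le_sum fun p hp => ?_
    have hpp := Nat.prime_of_mem_primeFactors hp
    have hpd := Nat.dvd_of_mem_primeFactors hp
    have hp1 : p - 1 ≠ 0 := by have := hpp.two_le; omega
    rw [Nat.factorization_mul (pow_ne_zero _ hpp.ne_zero) hp1, Nat.factorization_pow]
    simp only [Finsupp.add_apply, Finsupp.smul_apply, smul_eq_mul]
    have h3 : (m.factorization p - 1) * p.factorization q = 0 := by
      by_cases hpq : p = q
      · subst hpq
        have : ¬ 2 ≤ m.factorization p := fun h =>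
          h1 ((hq.pow_dvd_iff_le_factorization hm).2 h)
        have : m.factorization p - 1 = 0 := by omega
        rw [this, zero_mul]
      · rw [hpp.factorization, Finsupp.single_apply, if_neg hpq, mul_zero]
    rw [h3, zero_add]
    split_ifs with h
    · have : ¬ 2 ≤ (p - 1).factorization q := fun h' =>
        h2 p hpp hpd ((hq.pow_dvd_iff_le_factorization hp1).2 h')
      omega
    · rw [Nat.factorization_eq_zero_of_not_dvd h]
  · intro p hp
    rw [Nat.support_factorization] at hp
    have hpp := Nat.prime_of_mem_primeFactors hp
    have := hpp.two_le
    exact mul_ne_zero (pow_ne_zero _ hpp.ne_zero) (by omega)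

/-- The pairs `(p, r)` of primes up to `X` with `r ∣ p - 1` and `q ∣ r - 1`. -/
def chains (X q : ℕ) : Finset (ℕ × ℕ) :=
  {w ∈ primesTo X ×ˢ primesTo X | w.2 ∣ w.1 - 1 ∧ q ∣ w.2 - 1}

lemma mem_chains {X q : ℕ} {w : ℕ × ℕ} : w ∈ chains X q ↔
    (w.1 ∈ primesTo X ∧ w.2 ∈ primesTo X) ∧ w.2 ∣ w.1 - 1 ∧ q ∣ w.2 - 1 := by
  simp [chains]

lemma lt_of_dvd_pred {p q : ℕ} (hp : p.Prime) (h : q ∣ p - 1) : q < p := by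
  have := hp.two_le
  have := Nat.le_of_dvd (by omega) h
  omega

/-- The integers `n` for which the primes `q > Y` occur in `n`, in the `p - 1` with `p ∣ n` prime,
and in the `r - 1` with `r ∣ p - 1` prime, without any coincidence. -/
structure IsTypical (Y : ℝ) (n : ℕ) : Prop where
  sq_not_dvd : ∀ q : ℕ, q.Prime → Y < q → ¬ q ^ 2 ∣ n
  sq_not_dvd_pred : ∀ q p : ℕ, q.Prime → Y < q → p.Prime → p ∣ n → ¬ q ^ 2 ∣ p - 1
  unique_pred : ∀ q p p' : ℕ, q.Prime → Y < q → p.Prime → p ∣ n → p'.Prime → p' ∣ n →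
    q ∣ p - 1 → q ∣ p' - 1 → p = p'
  sq_not_dvd_pred_pred : ∀ q p r : ℕ, q.Prime → Y < q → p.Prime → p ∣ n → r.Prime →
    r ∣ p - 1 → ¬ q ^ 2 ∣ r - 1

/-- For typical `n`, large primes divide `φ n` at most once, so the exponent of `q` in `φ (φ n)` is
at most the number of primes `r ∣ φ n` with `q ∣ r - 1`. Each of them lies in a chain. -/
lemma factorization_totient_totient_le {Y : ℝ} {n X q : ℕ} (hn : 1 ≤ n) (hnX : n ≤ X)
    (hg : IsTypical Y n) (hq : q.Prime) (hY : Y < q) :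
    n.totient.totient.factorization q ≤ #{w ∈ chains X q | w.1 ∣ n} := by
  have hn0 : n ≠ 0 := by omega
  have hφ0 : n.totient ≠ 0 := (Nat.totient_pos.2 hn).ne'
  -- a large prime dividing `φ n` divides `p - 1` for some prime `p ∣ n`
  have hfac : ∀ r : ℕ, r.Prime → Y < r → n.totient.factorization r ≤
      #{p ∈ n.primeFactors | r ∣ p - 1} := fun r hr hrY =>
    factorization_totient_le r n hr hn0 (hg.sq_not_dvd r hr hrY)
      fun p hp hpn => hg.sq_not_dvd_pred r p hr hrY hp hpn
  have hex : ∀ r : ℕ, r.Prime → Y < r → r ∣ n.totient → ∃ p, p.Prime ∧ p ∣ n ∧ r ∣ p - 1 := by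
    intro r hr hrY hrn
    have h1 := hfac r hr hrY
    have h2 := hr.factorization_pos_of_dvd hφ0 hrn
    obtain ⟨p, hp⟩ := Finset.card_pos.1 (h2.trans_le h1)
    simp only [mem_filter, Nat.mem_primeFactors] at hp
    exact ⟨p, hp.1.1, hp.1.2.1, hp.2⟩
  have hgt : ∀ r : ℕ, r.Prime → q ∣ r - 1 → Y < r := by
    intro r hr h
    have : (q : ℝ) < r := by exact_mod_cast lt_of_dvd_pred hr h
    linarith
  have hsq : ¬ q ^ 2 ∣ n.totient := by
    intro h
    have h2 := (hq.pow_dvd_iff_le_factorization hφ0).1 h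
    have h1 := h2.trans (hfac q hq hY)
    obtain ⟨p, hp, p', hp', hne⟩ := Finset.one_lt_card.1 (Nat.lt_of_succ_le h1)
    simp only [mem_filter, Nat.mem_primeFactors] at hp hp'
    exact hne (hg.unique_pred q p p' hq hY hp.1.1 hp.1.2.1 hp'.1.1 hp'.1.2.1 hp.2 hp'.2)
  have hr : ∀ r, r.Prime → r ∣ n.totient → ¬ q ^ 2 ∣ r - 1 := by
    intro r hr hrn hd
    have hqr : q ∣ r - 1 := (dvd_pow_self q two_ne_zero).trans hd
    obtain ⟨p, hp, hpn, hrp⟩ := hex r hr (hgt r hr hqr) hrn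
    exact hg.sq_not_dvd_pred_pred q p r hq hY hp hpn hr hrp hd
  refine (factorization_totient_le q n.totient hq hφ0 hsq hr).trans ?_
  refine Finset.card_le_card_of_surjOn (fun w => w.2) ?_
  intro r hr
  simp only [coe_filter, Nat.mem_primeFactors, Set.mem_ofPred_eq] at hr
  obtain ⟨⟨hrp, hrn, _⟩, hqr⟩ := hr
  obtain ⟨p, hp, hpn, hrp'⟩ := hex r hrp (hgt r hrp hqr) hrn
  refine ⟨(p, r), ?_, rfl⟩
  have hpX : p ≤ X := (Nat.le_of_dvd hn hpn).trans hnX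
  simp only [coe_filter, Set.mem_ofPred_eq, mem_chains, mem_primesTo]
  exact ⟨⟨⟨⟨hpX, hp⟩, (lt_of_dvd_pred hp hrp').le.trans hpX, hrp⟩, hrp', hqr⟩, hpn⟩

/-! ### Counting the integers that are not typical, and pairs of chains -/

lemma card_multiples_le (X D : ℕ) : (#{n ∈ Icc 1 X | D ∣ n} : ℝ) ≤ X * (1 / D) := by
  have h : (Icc 1 X) = Ioc 0 X := by ext; simp; omega
  rw [h, Nat.Ioc_filter_dvd_card_eq_div, mul_one_div]
  exact Nat.cast_div_le

/-- Union bound. The second decidability instance is implicit so that it is found by unification in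
iterated applications. -/
lemma card_exists_le {ι : Type*} (U : Finset ℕ) (T : Finset ι) (P : ι → ℕ → Prop)
    [∀ t, DecidablePred (P t)] {_ : DecidablePred fun n => ∃ t ∈ T, P t n} (g : ι → ℝ)
    (h : ∀ t ∈ T, (#{n ∈ U | P t n} : ℝ) ≤ g t) :
    (#{n ∈ U | ∃ t ∈ T, P t n} : ℝ) ≤ ∑ t ∈ T, g t := by
  classical
  have h1 : U.filter (fun n => ∃ t ∈ T, P t n) = T.biUnion fun t => U.filter (P t) := by
    ext n
    simp only [mem_filter, mem_biUnion]
    constructor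
    · rintro ⟨h, t, ht, hp⟩; exact ⟨t, ht, h, hp⟩
    · rintro ⟨t, ht, h, hp⟩; exact ⟨h, t, ht, hp⟩
  rw [h1]
  calc _ ≤ ((∑ t ∈ T, #(U.filter (P t)) : ℕ) : ℝ) := by exact_mod_cast Finset.card_biUnion_le
    _ = ∑ t ∈ T, (#(U.filter (P t)) : ℝ) := by push_cast; rfl
    _ ≤ _ := Finset.sum_le_sum h

lemma card_two_multiples_le (X p p' : ℕ) (hp : p.Prime) (hp' : p'.Prime) (hne : p ≠ p') :
    (#{n ∈ Icc 1 X | p ∣ n ∧ p' ∣ n} : ℝ) ≤ X * (1 / p * (1 / p')) := by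
  have h := card_multiples_le X (p * p')
  have h1 : (Icc 1 X).filter (fun n => p ∣ n ∧ p' ∣ n) ⊆ (Icc 1 X).filter (p * p' ∣ ·) := by
    intro n hn
    simp only [mem_filter] at *
    exact ⟨hn.1, ((Nat.coprime_primes hp hp').2 hne).mul_dvd_of_dvd_of_dvd hn.2.1 hn.2.2⟩
  have h2 : (#((Icc 1 X).filter (fun n => p ∣ n ∧ p' ∣ n)) : ℝ) ≤
      #((Icc 1 X).filter (p * p' ∣ ·)) := by exact_mod_cast Finset.card_le_card h1
  refine h2.trans (h.trans_eq ?_)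
  push_cast
  rw [one_div_mul_one_div]

lemma good_one {q : ℕ} (hq : q.Prime) (h4 : (4 : ℝ) < q) :
    ∑ p ∈ q.primeFactors, (1 : ℝ) / p ≤ 1 / 2 := by
  rw [hq.primeFactors, Finset.sum_singleton]
  exact one_div_le_one_div_of_le (by norm_num) (by linarith)

lemma good_sq {q : ℕ} (hq : q.Prime) (h4 : (4 : ℝ) < q) :
    ∑ p ∈ (q ^ 2).primeFactors, (1 : ℝ) / p ≤ 1 / 2 := by
  rw [Nat.primeFactors_pow _ two_ne_zero]
  exact good_one hq h4

lemma good_mul {q r : ℕ} (hq : q.Prime) (hr : r.Prime) (hne : q ≠ r) (h4 : (4 : ℝ) < q)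
    (h4' : (4 : ℝ) < r) : ∑ p ∈ (q * r).primeFactors, (1 : ℝ) / p ≤ 1 / 2 := by
  rw [Nat.primeFactors_mul hq.ne_zero hr.ne_zero, hq.primeFactors, hr.primeFactors,
    Finset.sum_union (by simpa using hne), Finset.sum_singleton, Finset.sum_singleton]
  have h1 : (1 : ℝ) / q ≤ 1 / 4 := one_div_le_one_div_of_le (by norm_num) h4.le
  have h2 : (1 : ℝ) / r ≤ 1 / 4 := one_div_le_one_div_of_le (by norm_num) h4'.le
  linarith

/-- The uniform bound `A / d` for the sum of `1 / p` over the primes `p ≤ X` with `p ≡ 1` modulo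
`d`, for all `d` with `∑_{p ∣ d} 1 / p ≤ 1 / 2`. -/
def RecipBound (X : ℕ) (A : ℝ) : Prop :=
  ∀ d : ℕ, 0 < d → ∑ p ∈ d.primeFactors, (1 : ℝ) / p ≤ 1 / 2 → recipSum X d ≤ A / d

section
variable {X : ℕ} {A Y : ℝ}

lemma sum_chains (q : ℕ) (f : ℕ × ℕ → ℝ) : ∑ w ∈ chains X q, f w =
    ∑ r ∈ primesTo X with q ∣ r - 1, ∑ p ∈ primesTo X with r ∣ p - 1, f (p, r) := by
  rw [chains, Finset.sum_filter, Finset.sum_product, Finset.sum_comm, Finset.sum_filter]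
  refine Finset.sum_congr rfl fun r _ => ?_
  rw [Finset.sum_filter]
  split_ifs with h
  · simp [h]
  · simp [h]

/-- Two applications of the bound: `d ∣ r - 1` and `r ∣ p - 1`. -/
lemma sum_pred_le (hA : RecipBound X A) (hA1 : 1 ≤ A) {d q : ℕ}
    (h4 : (4 : ℝ) < q) (hqd : q ∣ d) (hd : 0 < d) (hgood : ∑ p ∈ d.primeFactors, (1 : ℝ) / p ≤ 1 / 2) :
    ∑ r ∈ primesTo X with d ∣ r - 1, recipSum X r ≤ A ^ 2 / d := by
  have h1 : ∀ r ∈ (primesTo X).filter (fun r => d ∣ r - 1), recipSum X r ≤ A * (1 / r) := by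
    intro r hr
    simp only [mem_filter, mem_primesTo] at hr
    have h : (q : ℝ) < r := by exact_mod_cast lt_of_dvd_pred hr.1.2 (hqd.trans hr.2)
    rw [mul_one_div]
    exact hA r hr.1.2.pos (good_one hr.1.2 (h4.trans h))
  refine (Finset.sum_le_sum h1).trans ?_
  rw [← Finset.mul_sum]
  calc _ ≤ A * (A / d) := by
        gcongr; exact hA d hd hgood
    _ = _ := by ring

/-- The mean number of ordered pairs of distinct chains. Pairs of chains with distinct primes
`p ≠ p'` contribute `(A ^ 2 / q) ^ 2`. Pairs sharing `p` have `r ≠ r'`, so `r * r' ∣ p - 1`, and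
contribute `A ^ 3 / q ^ 2`. -/
lemma sum_card_offDiag_le (hA : RecipBound X A) (hA1 : 1 ≤ A) {q : ℕ} (hq : q.Prime)
    (h4 : (4 : ℝ) < q) :
    ∑ n ∈ Icc 1 X, (#({w ∈ chains X q | w.1 ∣ n}.offDiag) : ℝ) ≤ X * (2 * A ^ 4) * (1 / q ^ 2) := by
  have hq0 : (0 : ℝ) < q := by linarith
  have hA0 : (0 : ℝ) < A := by linarith
  have h1 : ∀ n ∈ Icc 1 X, (#({w ∈ chains X q | w.1 ∣ n}.offDiag) : ℝ) =
      ∑ w ∈ chains X q, ∑ w' ∈ chains X q, if w ≠ w' ∧ w.1 ∣ n ∧ w'.1 ∣ n then (1 : ℝ) else 0 := by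
    intro n _
    rw [← Finset.sum_product', ← Finset.sum_filter, Finset.sum_const, nsmul_eq_mul, mul_one]
    congr 2
    ext ⟨w, w'⟩
    simp only [mem_offDiag, mem_filter, mem_product]
    tauto
  rw [Finset.sum_congr rfl h1, Finset.sum_comm]
  have h2 : ∀ w ∈ chains X q, ∑ n ∈ Icc 1 X, ∑ w' ∈ chains X q,
        (if w ≠ w' ∧ w.1 ∣ n ∧ w'.1 ∣ n then (1 : ℝ) else 0) ≤
      ∑ w' ∈ chains X q, X * (1 / (w.1 : ℝ) * (1 / (w'.1 : ℝ)) +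
        if w.1 = w'.1 ∧ w.2 ≠ w'.2 then 1 / (w.1 : ℝ) else 0) := by
    intro w hw
    rw [Finset.sum_comm]
    refine Finset.sum_le_sum fun w' hw' => ?_
    rw [mem_chains, mem_primesTo, mem_primesTo] at hw hw'
    rw [← Finset.sum_filter, Finset.sum_const, nsmul_eq_mul, mul_one]
    by_cases hww : w = w'
    · rw [Finset.filter_eq_empty_iff.2 (by simp [hww])]
      rw [Finset.card_empty, Nat.cast_zero]
      split_ifs <;> positivity
    · have hfil : (Icc 1 X).filter (fun n => w ≠ w' ∧ w.1 ∣ n ∧ w'.1 ∣ n) =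
          (Icc 1 X).filter (fun n => w.1 ∣ n ∧ w'.1 ∣ n) :=
        Finset.filter_congr fun n _ => by simp [hww]
      rw [hfil, mul_add]
      by_cases h : w.1 = w'.1
      · have h' : w.2 ≠ w'.2 := fun h' => hww (Prod.ext h h')
        rw [if_pos ⟨h, h'⟩, ← h]
        simp only [and_self]
        have := card_multiples_le X w.1
        have : (0 : ℝ) ≤ X * (1 / (w.1 : ℝ) * (1 / (w.1 : ℝ))) := by positivity
        linarith
      · rw [if_neg (fun h' => h h'.1), mul_zero, add_zero]
        exact card_two_multiples_le X _ _ hw.1.1.2 hw'.1.1.2 h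
  refine (Finset.sum_le_sum h2).trans ?_
  simp_rw [← Finset.mul_sum, Finset.sum_add_distrib]
  rw [← Finset.sum_mul_sum]
  have hW : ∑ w ∈ chains X q, 1 / (w.1 : ℝ) ≤ A ^ 2 / q := by
    rw [sum_chains]
    exact sum_pred_le hA hA1 h4 dvd_rfl hq.pos (good_one hq h4)
  have hW0 : 0 ≤ ∑ w ∈ chains X q, 1 / (w.1 : ℝ) := Finset.sum_nonneg fun _ _ => by positivity
  have hD : ∑ w ∈ chains X q, ∑ w' ∈ chains X q,
      (if w.1 = w'.1 ∧ w.2 ≠ w'.2 then 1 / (w.1 : ℝ) else 0) ≤ A ^ 3 / q ^ 2 := by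
    rw [sum_chains]
    have h3 : ∀ r ∈ (primesTo X).filter (fun r => q ∣ r - 1),
        ∑ p ∈ primesTo X with r ∣ p - 1, ∑ w' ∈ chains X q,
          (if p = w'.1 ∧ r ≠ w'.2 then 1 / (p : ℝ) else 0) ≤
        ∑ r' ∈ primesTo X with q ∣ r' - 1, A * (1 / (r : ℝ) * (1 / (r' : ℝ))) := by
      intro r hr
      simp_rw [sum_chains]
      rw [Finset.sum_comm]
      refine Finset.sum_le_sum fun r' hr' => ?_
      simp only [mem_filter, mem_primesTo] at hr hr'
      have h4r : (4 : ℝ) < r := h4.trans (by exact_mod_cast lt_of_dvd_pred hr.1.2 hr.2)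
      have h4r' : (4 : ℝ) < r' := h4.trans (by exact_mod_cast lt_of_dvd_pred hr'.1.2 hr'.2)
      by_cases hrr : r = r'
      · simp only [hrr, ne_eq, not_true_eq_false, and_false, if_false, Finset.sum_const_zero]
        positivity
      · have h5 : ∀ p ∈ (primesTo X).filter (fun p => r ∣ p - 1),
            ∑ p' ∈ primesTo X with r' ∣ p' - 1, (if p = p' ∧ r ≠ r' then 1 / (p : ℝ) else 0) =
            if r' ∣ p - 1 then 1 / (p : ℝ) else 0 := by
          intro p hp
          have hp' := (mem_filter.1 hp).1
          simp only [ne_eq, hrr, not_false_eq_true, and_true]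
          rw [Finset.sum_ite_eq]
          simp [hp']
        rw [Finset.sum_congr rfl h5, ← Finset.sum_filter, Finset.filter_filter]
        have h6 := hA (r * r') (Nat.mul_pos hr.1.2.pos hr'.1.2.pos)
          (good_mul hr.1.2 hr'.1.2 hrr h4r h4r')
        have h7 : (primesTo X).filter (fun p => r ∣ p - 1 ∧ r' ∣ p - 1) ⊆
            (primesTo X).filter (fun p => r * r' ∣ p - 1) := by
          intro p hp
          simp only [mem_filter] at *
          exact ⟨hp.1, ((Nat.coprime_primes hr.1.2 hr'.1.2).2 hrr).mul_dvd_of_dvd_of_dvd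
            hp.2.1 hp.2.2⟩
        refine (Finset.sum_le_sum_of_subset_of_nonneg h7 fun _ _ _ => by positivity).trans ?_
        refine h6.trans_eq ?_
        push_cast
        rw [one_div_mul_one_div, mul_one_div]
    refine (Finset.sum_le_sum h3).trans ?_
    simp_rw [← Finset.mul_sum]
    rw [← Finset.sum_mul]
    have h8 := hA q hq.pos (good_one hq h4)
    have h9 := recipSum_nonneg X q
    change A * (recipSum X q * recipSum X q) ≤ _
    calc _ ≤ A * (A / q * (A / q)) := by gcongr
      _ = _ := by field_simp
  calc _ ≤ (X : ℝ) * (A ^ 2 / q * (A ^ 2 / q) + A ^ 3 / q ^ 2) := by gcongr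
    _ = X * (A ^ 4 + A ^ 3) * (1 / q ^ 2) := by field_simp
    _ ≤ _ := by
      have : A ^ 3 ≤ A ^ 4 := pow_le_pow_right₀ hA1 (by norm_num)
      gcongr
      linarith

open Classical in
/-- Each of the four ways of failing to be typical at `q` has density at most `A ^ 2 / q ^ 2`. -/
lemma card_not_typical_le (hA : RecipBound X A) (hA1 : 1 ≤ A) (hY : 4 ≤ Y) :
    (#{n ∈ Icc 1 X | ¬ IsTypical Y n} : ℝ) ≤
      X * (4 * A ^ 2) * ∑ q ∈ primesTo X with Y < ((q : ℕ) : ℝ), 1 / (q : ℝ) ^ 2 := by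
  set Q := (primesTo X).filter (fun q : ℕ => Y < (q : ℝ)) with hQ
  have hA0 : (0 : ℝ) < A := by linarith
  have hQm : ∀ q ∈ Q, q.Prime ∧ (4 : ℝ) < q := by
    intro q hq
    rw [hQ, mem_filter, mem_primesTo] at hq
    exact ⟨hq.1.2, by linarith [hq.2]⟩
  have hA2 : A ≤ A ^ 2 := by nlinarith
  have e1 : (#{n ∈ Icc 1 X | ∃ q ∈ Q, q ^ 2 ∣ n} : ℝ) ≤
      ∑ q ∈ Q, X * A ^ 2 * (1 / (q : ℝ) ^ 2) := by
    refine card_exists_le (Icc 1 X) Q (fun q n => q ^ 2 ∣ n) _ fun q hq => ?_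
    refine (card_multiples_le X (q ^ 2)).trans ?_
    push_cast
    gcongr
    nlinarith [Nat.cast_nonneg (α := ℝ) X]
  have e2 : (#{n ∈ Icc 1 X | ∃ q ∈ Q, ∃ p ∈ (primesTo X).filter (fun p => q ^ 2 ∣ p - 1), p ∣ n} : ℝ)
      ≤ ∑ q ∈ Q, X * A ^ 2 * (1 / (q : ℝ) ^ 2) := by
    refine card_exists_le (Icc 1 X) Q
      (fun q n => ∃ p ∈ (primesTo X).filter (fun p => q ^ 2 ∣ p - 1), p ∣ n) _ fun q hq => ?_
    refine (card_exists_le (Icc 1 X) _ (fun p n => p ∣ n) _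
      fun p hp => card_multiples_le X p).trans ?_
    rw [← Finset.mul_sum, mul_assoc]
    obtain ⟨hq, h4⟩ := hQm q hq
    have := hA (q ^ 2) (pow_pos hq.pos 2) (good_sq hq h4)
    gcongr
    refine this.trans ?_
    push_cast
    rw [mul_one_div]
    gcongr
  have e3 : (#{n ∈ Icc 1 X | ∃ q ∈ Q, ∃ p ∈ (primesTo X).filter (fun p => q ∣ p - 1),
      ∃ p' ∈ (primesTo X).filter (fun p => q ∣ p - 1), p ≠ p' ∧ p ∣ n ∧ p' ∣ n} : ℝ)
      ≤ ∑ q ∈ Q, X * A ^ 2 * (1 / (q : ℝ) ^ 2) := by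
    refine card_exists_le (Icc 1 X) Q (fun q n => ∃ p ∈ (primesTo X).filter (fun p => q ∣ p - 1),
      ∃ p' ∈ (primesTo X).filter (fun p => q ∣ p - 1), p ≠ p' ∧ p ∣ n ∧ p' ∣ n) _ fun q hq => ?_
    refine (card_exists_le (Icc 1 X) _ (fun p n => ∃ p' ∈ (primesTo X).filter (fun p => q ∣ p - 1),
      p ≠ p' ∧ p ∣ n ∧ p' ∣ n)
      (fun p => ∑ p' ∈ primesTo X with q ∣ p' - 1, X * (1 / (p : ℝ) * (1 / (p' : ℝ))))
      fun p hp => ?_).trans ?_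
    · refine card_exists_le (Icc 1 X) _ (fun p' n => p ≠ p' ∧ p ∣ n ∧ p' ∣ n) _ fun p' hp' => ?_
      rw [mem_filter, mem_primesTo] at hp hp'
      by_cases h : p = p'
      · simp only [h, ne_eq, not_true_eq_false, false_and, Finset.filter_false, Finset.card_empty,
          Nat.cast_zero]
        positivity
      · simp only [ne_eq, h, not_false_eq_true, true_and]
        convert card_two_multiples_le X p p' hp.1.2 hp'.1.2 h
    · simp_rw [← Finset.mul_sum]
      rw [← Finset.sum_mul, mul_assoc]
      obtain ⟨hq, h4⟩ := hQm q hq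
      have h8 := hA q hq.pos (good_one hq h4)
      have h9 := recipSum_nonneg X q
      refine mul_le_mul_of_nonneg_left ?_ (Nat.cast_nonneg X)
      change recipSum X q * recipSum X q ≤ _
      calc _ ≤ A / q * (A / q) := by gcongr
        _ = _ := by field_simp
  have e4 : (#{n ∈ Icc 1 X | ∃ q ∈ Q, ∃ r ∈ (primesTo X).filter (fun r => q ^ 2 ∣ r - 1),
      ∃ p ∈ (primesTo X).filter (fun p => r ∣ p - 1), p ∣ n} : ℝ)
      ≤ ∑ q ∈ Q, X * A ^ 2 * (1 / (q : ℝ) ^ 2) := by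
    refine card_exists_le (Icc 1 X) Q (fun q n => ∃ r ∈ (primesTo X).filter (fun r => q ^ 2 ∣ r - 1),
      ∃ p ∈ (primesTo X).filter (fun p => r ∣ p - 1), p ∣ n) _ fun q hq => ?_
    refine (card_exists_le (Icc 1 X) _ (fun r n =>
      ∃ p ∈ (primesTo X).filter (fun p => r ∣ p - 1), p ∣ n) (fun r => X * recipSum X r)
      fun r hr => ?_).trans ?_
    · refine (card_exists_le (Icc 1 X) _ (fun p n => p ∣ n) _
        fun p hp => card_multiples_le X p).trans ?_
      rw [← Finset.mul_sum]
      rfl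
    · rw [← Finset.mul_sum, mul_assoc]
      obtain ⟨hq, h4⟩ := hQm q hq
      have := sum_pred_le hA hA1 h4 (dvd_pow_self q two_ne_zero) (pow_pos hq.pos 2) (good_sq hq h4)
      gcongr
      refine this.trans_eq ?_
      push_cast
      rw [mul_one_div]
  set F1 := (Icc 1 X).filter (fun n => ∃ q ∈ Q, q ^ 2 ∣ n)
  set F2 := (Icc 1 X).filter
    (fun n => ∃ q ∈ Q, ∃ p ∈ (primesTo X).filter (fun p => q ^ 2 ∣ p - 1), p ∣ n)
  set F3 := (Icc 1 X).filter (fun n => ∃ q ∈ Q, ∃ p ∈ (primesTo X).filter (fun p => q ∣ p - 1),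
      ∃ p' ∈ (primesTo X).filter (fun p => q ∣ p - 1), p ≠ p' ∧ p ∣ n ∧ p' ∣ n)
  set F4 := (Icc 1 X).filter (fun n => ∃ q ∈ Q, ∃ r ∈ (primesTo X).filter (fun r => q ^ 2 ∣ r - 1),
      ∃ p ∈ (primesTo X).filter (fun p => r ∣ p - 1), p ∣ n)
  have hsub : (Icc 1 X).filter (fun n => ¬ IsTypical Y n) ⊆ F1 ∪ F2 ∪ F3 ∪ F4 := by
    intro n hn
    obtain ⟨hnI, hnt⟩ := mem_filter.1 hn
    have hnI' := mem_Icc.1 hnI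
    by_contra hc
    simp only [mem_union, F1, F2, F3, F4, mem_filter, hnI, true_and, not_or] at hc
    obtain ⟨⟨⟨c1, c2⟩, c3⟩, c4⟩ := hc
    have hle : ∀ p, p.Prime → p ∣ n → p ∈ primesTo X := fun p hp hpn =>
      mem_primesTo.2 ⟨(Nat.le_of_dvd hnI'.1 hpn).trans hnI'.2, hp⟩
    have hpred : ∀ p q, p ∈ primesTo X → q.Prime → q ∣ p - 1 → q ∈ primesTo X := by
      intro p q hp hq h
      rw [mem_primesTo] at *
      exact ⟨(lt_of_dvd_pred hp.2 h).le.trans hp.1, hq⟩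
    have hQi : ∀ q : ℕ, q ∈ primesTo X → Y < q → q ∈ Q := fun q h h' => mem_filter.2 ⟨h, h'⟩
    refine hnt ⟨?_, ?_, ?_, ?_⟩
    · intro q hq hqY h
      exact c1 ⟨q, hQi q (hle q hq ((dvd_pow_self q two_ne_zero).trans h)) hqY, h⟩
    · intro q p hq hqY hp hpn h
      have hpX := hle p hp hpn
      exact c2 ⟨q, hQi q (hpred p q hpX hq ((dvd_pow_self q two_ne_zero).trans h)) hqY,
        p, ⟨hpX, h⟩, hpn⟩
    · intro q p p' hq hqY hp hpn hp' hpn' h h'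
      by_contra hne
      have hpX := hle p hp hpn
      exact c3 ⟨q, hQi q (hpred p q hpX hq h) hqY, p, ⟨hpX, h⟩,
        p', ⟨hle p' hp' hpn', h'⟩, hne, hpn, hpn'⟩
    · intro q p r hq hqY hp hpn hr h h'
      have hpX := hle p hp hpn
      have hrX := hpred p r hpX hr h
      exact c4 ⟨q, hQi q (hpred r q hrX hq ((dvd_pow_self q two_ne_zero).trans h')) hqY,
        r, ⟨hrX, h'⟩, p, ⟨hpX, h⟩, hpn⟩
  have hcard : (#((Icc 1 X).filter (fun n => ¬ IsTypical Y n)) : ℝ) ≤ #F1 + #F2 + #F3 + #F4 := by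
    have h1 := Finset.card_le_card hsub
    have h2 := Finset.card_union_le (F1 ∪ F2 ∪ F3) F4
    have h3 := Finset.card_union_le (F1 ∪ F2) F3
    have h4 := Finset.card_union_le F1 F2
    have : #((Icc 1 X).filter (fun n => ¬ IsTypical Y n)) ≤ #F1 + #F2 + #F3 + #F4 := by omega
    exact_mod_cast this
  rw [← Finset.mul_sum] at e1 e2 e3 e4
  linarith

/-! ### The contribution of large primes -/

/-- The sum of `v_q (φ (φ n)) * log q` over the primes `q > Y` with `v_q (φ (φ n)) ≥ 2`. -/
noncomputable def largeContribution (Y : ℝ) (n : ℕ) : ℝ :=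
  ∑ᶠ (q : ℕ) (_ : q.Prime ∧ Y < (q : ℝ) ∧ 2 ≤ (Nat.totient (Nat.totient n)).factorization q),
    ((Nat.totient (Nat.totient n)).factorization q : ℝ) * Real.log q

/-- An exponent `v ≥ 2` is at most the number `k` of chains, hence at most the number
`k * (k - 1)` of ordered pairs of distinct chains. -/
lemma largeContribution_le {n : ℕ} (hn : 1 ≤ n) (hnX : n ≤ X) (hg : IsTypical Y n) :
    largeContribution Y n ≤ ∑ q ∈ primesTo X with Y < ((q : ℕ) : ℝ),
      Real.log q * #({w ∈ chains X q | w.1 ∣ n}.offDiag) := by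
  have hset : {q : ℕ | q.Prime ∧ Y < (q : ℝ) ∧
      2 ≤ (Nat.totient (Nat.totient n)).factorization q} =
      ((((primesTo X).filter (fun q : ℕ => Y < (q : ℝ))).filter
        (fun q => 2 ≤ (Nat.totient (Nat.totient n)).factorization q) : Finset ℕ) : Set ℕ) := by
    ext q
    simp only [Set.mem_ofPred_eq, coe_filter, mem_filter, mem_primesTo]
    constructor
    · rintro ⟨hq, hqY, h2⟩
      have h := h2.trans (factorization_totient_totient_le hn hnX hg hq hqY)
      obtain ⟨w, hw⟩ := Finset.card_pos.1 (lt_of_lt_of_le two_pos h)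
      have hw' := mem_chains.1 (mem_filter.1 hw).1
      rw [mem_primesTo, mem_primesTo] at hw'
      exact ⟨⟨⟨(lt_of_dvd_pred hw'.1.2.2 hw'.2.2).le.trans hw'.1.2.1, hq⟩, hqY⟩, h2⟩
    · rintro ⟨⟨⟨_, hq⟩, hqY⟩, h2⟩
      exact ⟨hq, hqY, h2⟩
  have heq : largeContribution Y n = ∑ᶠ q ∈ {q : ℕ | q.Prime ∧ Y < (q : ℝ) ∧
      2 ≤ (Nat.totient (Nat.totient n)).factorization q},
      ((Nat.totient (Nat.totient n)).factorization q : ℝ) * Real.log q := rfl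
  rw [heq, hset, finsum_mem_coe_finset]
  refine le_trans (Finset.sum_le_sum fun q hq => ?_)
    (Finset.sum_le_sum_of_subset_of_nonneg (Finset.filter_subset _ _) fun q _ _ =>
      mul_nonneg (Real.log_natCast_nonneg q) (Nat.cast_nonneg _))
  simp only [mem_filter, mem_primesTo] at hq
  obtain ⟨⟨⟨_, hqp⟩, hqY⟩, h2⟩ := hq
  have h := factorization_totient_totient_le hn hnX hg hqp hqY
  rw [mul_comm]
  have hl := Real.log_natCast_nonneg q
  gcongr
  rw [Finset.offDiag_card]
  -- `k ≤ k * k - k` once `2 ≤ k`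
  refine h.trans ?_
  have h2' := h2.trans h
  have := Nat.mul_le_mul_right (#{w ∈ chains X q | w.1 ∣ n}) h2'
  omega

/-- The integers that are not typical, plus Markov's inequality for the typical ones. -/
lemma card_large_le (hA : RecipBound X A) (hA1 : 1 ≤ A) (hY : 4 ≤ Y) {T : ℝ} (hT : 0 < T) :
    (Set.ncard {n : ℕ | (1 ≤ n ∧ n ≤ X) ∧ T < largeContribution Y n} : ℝ) ≤
      X * (4 * A ^ 2) * (4 * Real.log 4 / (Y * Real.log Y)) +
      X * (2 * A ^ 4) * (4 * Real.log 4 / Y) / T := by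
  classical
  set Q := (primesTo X).filter (fun q : ℕ => Y < (q : ℝ)) with hQ
  set M : ℕ → ℝ := fun n => ∑ q ∈ Q, Real.log q * #({w ∈ chains X q | w.1 ∣ n}.offDiag) with hM
  have hM0 : ∀ n, 0 ≤ M n := fun n => Finset.sum_nonneg fun q _ =>
    mul_nonneg (Real.log_natCast_nonneg q) (Nat.cast_nonneg _)
  have hset : {n : ℕ | (1 ≤ n ∧ n ≤ X) ∧ T < largeContribution Y n} ⊆
      (((Icc 1 X).filter (fun n => ¬ IsTypical Y n) ∪ (Icc 1 X).filter (fun n => T < M n) :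
        Finset ℕ) : Set ℕ) := by
    rintro n ⟨hn, hlt⟩
    simp only [coe_union, coe_filter, mem_Icc, Set.mem_union, Set.mem_ofPred_eq]
    by_cases hg : IsTypical Y n
    · exact Or.inr ⟨hn, hlt.trans_le (largeContribution_le hn.1 hn.2 hg)⟩
    · exact Or.inl ⟨hn, hg⟩
  have h1 := Set.ncard_le_ncard hset (Finset.finite_toSet _)
  rw [Set.ncard_coe_finset] at h1
  have h2 : (Set.ncard {n : ℕ | (1 ≤ n ∧ n ≤ X) ∧ T < largeContribution Y n} : ℝ) ≤
      #((Icc 1 X).filter (fun n => ¬ IsTypical Y n)) + #((Icc 1 X).filter (fun n => T < M n)) := by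
    exact_mod_cast h1.trans (Finset.card_union_le _ _)
  refine h2.trans (add_le_add ?_ ?_)
  · refine (card_not_typical_le hA hA1 hY).trans ?_
    have := sum_inv_sq_le Y (by linarith) X
    gcongr
  · rw [le_div_iff₀ hT, ← nsmul_eq_mul]
    refine (Finset.card_nsmul_le_sum _ M T fun n hn => (mem_filter.1 hn).2.le).trans ?_
    refine (Finset.sum_le_sum_of_subset_of_nonneg (Finset.filter_subset _ _)
      fun n _ _ => hM0 n).trans ?_
    rw [hM, Finset.sum_comm]
    have h3 : ∀ q ∈ Q, ∑ n ∈ Icc 1 X, Real.log q * (#({w ∈ chains X q | w.1 ∣ n}.offDiag) : ℝ) ≤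
        X * (2 * A ^ 4) * (Real.log q / q ^ 2) := by
      intro q hq
      rw [hQ, mem_filter, mem_primesTo] at hq
      have hl := Real.log_natCast_nonneg q
      rw [← Finset.mul_sum]
      calc _ ≤ Real.log q * (X * (2 * A ^ 4) * (1 / q ^ 2)) := by
            gcongr
            exact sum_card_offDiag_le hA hA1 hq.1.2 (by linarith [hq.2])
        _ = _ := by ring
    refine (Finset.sum_le_sum h3).trans ?_
    rw [← Finset.mul_sum]
    have := sum_log_div_sq_le Y (by linarith) X
    gcongr

end

/-! ### Asymptotics -/

lemma recipBound_of_large {x : ℝ} (hx : 1 ≤ x) (hlx : 4 ≤ Real.log x)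
    (hllx : 1 ≤ Real.log (Real.log x)) :
    RecipBound ⌊x⌋₊ (390 * Real.log (Real.log x)) := by
  intro d hd hgood
  refine (recipSum_le ⌊x⌋₊ d hd hgood).trans ?_
  have hX : ⌊x⌋₊ ≠ 0 := (Nat.floor_pos.2 hx).ne'
  set L := Real.log x with hL
  have h1 : (Nat.log 2 ⌊x⌋₊ : ℝ) * Real.log 2 ≤ L := by
    rw [← Real.log_pow]
    refine Real.log_le_log (by positivity) ?_
    have h : ((2 ^ Nat.log 2 ⌊x⌋₊ : ℕ) : ℝ) ≤ x :=
      (Nat.cast_le.2 (Nat.pow_log_le_self 2 hX)).trans (Nat.floor_le (by linarith))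
    exact_mod_cast h
  have h2 : (Nat.log 2 ⌊x⌋₊ : ℝ) ≤ 2 * L := by
    have := Real.log_two_gt_d9
    nlinarith [Nat.cast_nonneg (α := ℝ) (Nat.log 2 ⌊x⌋₊)]
  have h3 : Real.log (Nat.log 2 ⌊x⌋₊ + 1 : ℕ) ≤ 2 * Real.log L := by
    have h : 2 * Real.log L = Real.log (L ^ 2) := by rw [Real.log_pow]; norm_num
    rw [h]
    refine Real.log_le_log (by positivity) ?_
    push_cast
    nlinarith
  exact div_le_div_of_nonneg_right (by linarith) (Nat.cast_nonneg d)

/-- The density of exceptional integers, for large `x` and in terms of `y = log log x`. -/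
lemma density_large_le {x t : ℝ} (hx : 1 ≤ x) (hlx : 4 ≤ Real.log x)
    (hllx : 2 ≤ Real.log (Real.log x)) (ht : 0 < t) :
    (Set.ncard {n : ℕ | (1 ≤ n ∧ n ≤ ⌊x⌋₊) ∧
        t * Real.log (Real.log x) ^ 2 < largeContribution (Real.log (Real.log x) ^ 2) n} : ℝ) / x ≤
      16 * 390 ^ 2 * Real.log 4 * (Real.log (Real.log (Real.log x) ^ 2))⁻¹ +
        8 * 390 ^ 4 * Real.log 4 * t⁻¹ := by
  have hA := recipBound_of_large hx hlx (by linarith)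
  set y := Real.log (Real.log x) with hy
  have hy0 : 0 < y := by linarith
  have hY : 4 ≤ y ^ 2 := by nlinarith
  have h := card_large_le hA (by linarith) hY (T := t * y ^ 2) (by positivity)
  have hlY : 0 < Real.log (y ^ 2) := Real.log_pos (by linarith)
  have hl4 : 0 < Real.log 4 := Real.log_pos (by norm_num)
  rw [div_le_iff₀ (by linarith)]
  refine h.trans ?_
  calc _ = (16 * 390 ^ 2 * Real.log 4 * (Real.log (y ^ 2))⁻¹ +
        8 * 390 ^ 4 * Real.log 4 * t⁻¹) * (⌊x⌋₊ : ℝ) := by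
          field_simp
          ring
    _ ≤ _ := by
      have := Nat.floor_le (show 0 ≤ x by linarith)
      gcongr

end PhiPhi

/-- For any `ψ` tending to infinity, the number of `n ≤ x` for which the contribution
`Σ_{q > (log log x)², v_q(φ(φ(n))) ≥ 2} v_q(φ(φ(n))) log q` exceeds
`ψ(x) (log log x)²` is `o(x)`. -/
theorem large_primes_in_phi_phi (ψ : ℝ → ℝ)
    (hψ : Filter.Tendsto ψ Filter.atTop Filter.atTop) :
    Filter.Tendsto (fun x : ℝ =>
      (Set.ncard {n : ℕ | 1 ≤ n ∧ (n : ℝ) ≤ x ∧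
        (∑ᶠ (q : ℕ) (_ : q.Prime ∧ (Real.log (Real.log x))^2 < (q : ℝ) ∧
            2 ≤ (Nat.totient (Nat.totient n)).factorization q),
          ((Nat.totient (Nat.totient n)).factorization q : ℝ) * Real.log q) >
          ψ x * (Real.log (Real.log x))^2} : ℝ) / x)
      Filter.atTop (nhds 0) := by
  have hll : Filter.Tendsto (fun x : ℝ => Real.log (Real.log x)) Filter.atTop Filter.atTop :=
    Real.tendsto_log_atTop.comp Real.tendsto_log_atTop
  have hlll : Filter.Tendsto (fun x : ℝ => Real.log (Real.log (Real.log x) ^ 2))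
      Filter.atTop Filter.atTop :=
    Real.tendsto_log_atTop.comp ((Filter.tendsto_pow_atTop two_ne_zero).comp hll)
  have hlim := (hlll.inv_tendsto_atTop.const_mul (16 * 390 ^ 2 * Real.log 4)).add
    (hψ.inv_tendsto_atTop.const_mul (8 * 390 ^ 4 * Real.log 4))
  simp only [mul_zero, add_zero] at hlim
  refine squeeze_zero' ?_ ?_ hlim
  · filter_upwards [Filter.eventually_ge_atTop 0] with x hx
    positivity
  · filter_upwards [Filter.eventually_ge_atTop 1, Real.tendsto_log_atTop.eventually_ge_atTop 4,
      hll.eventually_ge_atTop 2, hψ.eventually_gt_atTop 0] with x hx hlx hllx hψx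
    refine le_trans (le_of_eq ?_) (PhiPhi.density_large_le hx hlx hllx hψx)
    congr 3
    ext n
    rw [Set.mem_ofPred_eq, Set.mem_ofPred_eq, Nat.le_floor_iff (by linarith), and_assoc]
    rfl
end
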